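/- Let Ω be a non-convex quadrilateral with reflex interior angle β ∈ (π, 2π), and let d(x) = dist(x, ∂Ω). Then the constant c_β is best possible: for every c > c_β there exists u ∈ C_c^∞(Ω), u ≢ 0, with ∫_Ω |∇u|² dx < c ∫_Ω u²/d² dx. -/

import Mathlib

open Real MeasureTheory Set

noncomputable abbrev E2 := EuclideanSpace ℝ (Fin 2)

/-- `c` solves the Hardy-constant equation for the angle `β`. -/
def hardyEq (c β : ℝ) : Prop :=
  Real.sqrt c * Real.tan (Real.sqrt c * ((β - Real.pi) / 2)) =
    2 * (Real.Gamma ((3 + Real.sqrt (1 - 4 * c)) / 4) /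
         Real.Gamma ((1 + Real.sqrt (1 - 4 * c)) / 4)) ^ 2

/-- `βcr` is the critical angle: the unique angle in `(π, 2π)` with
`tan((βcr − π)/4) = 4 (Γ(3/4)/Γ(1/4))²`. -/
def isBetaCr (βcr : ℝ) : Prop :=
  βcr ∈ Set.Ioo Real.pi (2 * Real.pi) ∧
    Real.tan ((βcr - Real.pi) / 4) = 4 * (Real.Gamma (3 / 4) / Real.Gamma (1 / 4)) ^ 2

/-- `c = c_β`: for `β ≤ βcr`, `c = 1/4`; for `β > βcr`, `c` is the unique solution in
`(0, 1/4]` of the Hardy-constant equation for `β`. -/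
def isHardyConst (βcr β c : ℝ) : Prop :=
  (β ≤ βcr ∧ c = 1 / 4) ∨ (βcr < β ∧ c ∈ Set.Ioc (0 : ℝ) (1 / 4) ∧ hardyEq c β)

/-- The closed convex wedge with vertex `v` spanned by the directions towards `a` and `b`. -/
def wedge (v a b : E2) : Set E2 :=
  {p | ∃ s t : ℝ, 0 ≤ s ∧ 0 ≤ t ∧ p = v + s • (a - v) + t • (b - v)}

/-- `Ω` is a non-convex quadrilateral with reflex interior angle `β ∈ (π, 2π)`:
a bounded nonempty open set whose boundary is a simple closed polygon with four
vertices `v 0, v 1, v 2, v 3`, exactly one of whose interior angles equals `β` and is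
reflex (near the reflex vertex `Ω` coincides with the complement of the wedge of the two
adjacent edges, so the interior angle there is `2π` minus the unsigned angle between the
edges), while at every other vertex `Ω` coincides locally with the interior of the wedge
(a convex vertex, with interior angle `< π`). -/
def IsNonconvexQuadrilateral (Ω : Set E2) (β : ℝ) : Prop :=
  IsOpen Ω ∧ Bornology.IsBounded Ω ∧ Ω.Nonempty ∧
  Real.pi < β ∧ β < 2 * Real.pi ∧
  ∃ v : Fin 4 → E2, Function.Injective v ∧
    frontier Ω = ⋃ i, segment ℝ (v i) (v (i + 1)) ∧
    (∀ i, segment ℝ (v i) (v (i + 1)) ∩ segment ℝ (v (i + 1)) (v (i + 2)) = {v (i + 1)}) ∧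
    (∀ i, segment ℝ (v i) (v (i + 1)) ∩ segment ℝ (v (i + 2)) (v (i + 3)) = ∅) ∧
    ∃ i₀ : Fin 4,
      (EuclideanGeometry.angle (v (i₀ - 1)) (v i₀) (v (i₀ + 1)) = 2 * Real.pi - β ∧
        ∃ ε > 0, Metric.ball (v i₀) ε ∩ Ω =
          Metric.ball (v i₀) ε \ wedge (v i₀) (v (i₀ - 1)) (v (i₀ + 1))) ∧
      ∀ i ≠ i₀, EuclideanGeometry.angle (v (i - 1)) (v i) (v (i + 1)) < Real.pi ∧
        ∃ ε > 0, Metric.ball (v i) ε ∩ Ω =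
          Metric.ball (v i) ε ∩ interior (wedge (v i) (v (i - 1)) (v (i + 1)))


/-- The integral `∫ (cosh y + x)^(-p) dy`. -/
noncomputable def hG (p x : ℝ) : ℝ := ∫ y : ℝ, (Real.cosh y + x) ^ (-p)

lemma hG_exp_int {p : ℝ} (hp : 0 < p) : Integrable (fun y : ℝ => Real.exp (-p * |y|)) := by
  have h1 : IntegrableOn (fun y : ℝ => Real.exp (-p * y)) (Ioi 0) := exp_neg_integrableOn_Ioi 0 hp
  have h2 : IntegrableOn (fun y : ℝ => Real.exp (p * y)) (Iic 0) := integrableOn_exp_mul_Iic hp 0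
  rw [← integrableOn_univ, ← Iic_union_Ioi (a := (0:ℝ))]
  refine IntegrableOn.union ?_ ?_
  · refine h2.congr_fun (fun y hy => ?_) measurableSet_Iic
    simp only [abs_of_nonpos (show y ≤ 0 from hy)]; congr 1; ring
  · refine h1.congr_fun (fun y hy => ?_) measurableSet_Ioi
    simp only [abs_of_pos (show 0 < y from hy)]

lemma hG_lower {x y : ℝ} (hx : -(1/2) < x) : Real.exp |y| / 4 ≤ Real.cosh y + x := by
  have h1 : Real.exp |y| / 2 ≤ Real.cosh y := by
    rw [← Real.cosh_abs, Real.cosh_eq]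
    have := Real.exp_pos (-|y|)
    linarith
  have h2 := Real.one_le_cosh y
  linarith

lemma hG_bound {p x y : ℝ} (hp : 0 < p) (hx : -(1/2) < x) :
    (Real.cosh y + x) ^ (-p) ≤ 4 ^ p * Real.exp (-p * |y|) := by
  have h := hG_lower (y := y) hx
  have h0 : 0 < Real.exp |y| / 4 := by positivity
  calc (Real.cosh y + x) ^ (-p) ≤ (Real.exp |y| / 4) ^ (-p) :=
        Real.rpow_le_rpow_of_nonpos h0 h (by linarith)
    _ = 4 ^ p * Real.exp (-p * |y|) := by
        rw [Real.div_rpow (by positivity) (by norm_num), ← Real.exp_mul,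
          Real.rpow_neg (by norm_num : (0:ℝ) ≤ 4), div_inv_eq_mul, mul_comm, mul_comm |y|]

lemma hG_pos' {x y : ℝ} (hx : -(1/2) < x) : 0 < Real.cosh y + x := by
  have := Real.one_le_cosh y
  linarith

lemma hG_cont {p x : ℝ} (hx : -(1/2) < x) :
    Continuous (fun y : ℝ => (Real.cosh y + x) ^ (-p)) := by
  refine Continuous.rpow_const (by fun_prop) (fun y => Or.inl (hG_pos' hx).ne')

lemma hG_int {p x : ℝ} (hp : 0 < p) (hx : -(1/2) < x) :
    Integrable (fun y : ℝ => (Real.cosh y + x) ^ (-p)) := by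
  refine Integrable.mono' ((hG_exp_int hp).const_mul (4 ^ p)) (hG_cont hx).aestronglyMeasurable ?_
  refine Filter.Eventually.of_forall fun y => ?_
  rw [Real.norm_of_nonneg (Real.rpow_nonneg (hG_pos' hx).le _)]
  exact hG_bound hp hx

lemma hG_hasDerivAt {p x : ℝ} (hp : 0 < p) (hx : -(1/2) < x) :
    HasDerivAt (hG p) (-p * hG (p + 1) x) x := by
  have key := hasDerivAt_integral_of_dominated_loc_of_deriv_le (μ := volume) (x₀ := x)
    (s := Ioi (-(1/2) : ℝ)) (F := fun x y => (Real.cosh y + x) ^ (-p))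
    (F' := fun x y => -p * (Real.cosh y + x) ^ (-(p + 1)))
    (bound := fun y => p * (4 ^ (p + 1) * Real.exp (-(p + 1) * |y|)))
    (Ioi_mem_nhds hx) ?_ (hG_int hp hx) ?_ ?_ ?_ ?_
  · have := key.2
    rw [integral_const_mul] at this
    exact this
  · filter_upwards [Ioi_mem_nhds hx] with z hz
    exact (hG_cont hz).aestronglyMeasurable
  · exact ((hG_cont hx).const_smul (-p)).aestronglyMeasurable
  · refine Filter.Eventually.of_forall fun y z hz => ?_
    rw [norm_mul, norm_neg, Real.norm_of_nonneg hp.le,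
      Real.norm_of_nonneg (Real.rpow_nonneg (hG_pos' hz).le _)]
    exact mul_le_mul_of_nonneg_left (hG_bound (by linarith) hz) hp.le
  · exact ((hG_exp_int (by linarith)).const_mul _).const_mul _
  · refine Filter.Eventually.of_forall fun y z hz => ?_
    have h1 : HasDerivAt (fun x => Real.cosh y + x) 1 z := (hasDerivAt_id z).const_add _
    convert! h1.rpow_const (p := -p) (Or.inl (hG_pos' hz).ne') using 1
    rw [show -(p+1) = -p - 1 by ring]; ring

lemma hG_ode {p x : ℝ} (hp : 0 < p) (hx : -(1/2) < x) :
    (1 - x ^ 2) * (p * (p + 1) * hG (p + 2) x) + (1 + 2 * p) * x * (p * hG (p + 1) x)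
      - p ^ 2 * hG p x = 0 := by
  have hpos : ∀ y : ℝ, 0 < Real.cosh y + x := fun y => hG_pos' hx
  have hderiv : ∀ y : ℝ, HasDerivAt (fun y => Real.sinh y * (Real.cosh y + x) ^ (-(p + 1)))
      (-p * (Real.cosh y + x) ^ (-p) + (2 * p + 1) * x * (Real.cosh y + x) ^ (-(p + 1))
        + (p + 1) * (1 - x ^ 2) * (Real.cosh y + x) ^ (-(p + 2))) y := by
    intro y
    have h1 : HasDerivAt (fun y => Real.cosh y + x) (Real.sinh y) y :=
      (Real.hasDerivAt_cosh y).add_const _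
    have h2 := (Real.hasDerivAt_sinh y).mul
      (h1.rpow_const (p := -(p + 1)) (Or.inl (hpos y).ne'))
    convert! h2 using 1
    have e1 : (Real.cosh y + x) ^ (-p) = (Real.cosh y + x) ^ (-(p + 2)) * (Real.cosh y + x) ^ 2 := by
      rw [← Real.rpow_natCast, ← Real.rpow_add (hpos y)]; norm_num
    have e2 : (Real.cosh y + x) ^ (-(p + 1)) = (Real.cosh y + x) ^ (-(p + 2)) * (Real.cosh y + x) := by
      nth_rewrite 3 [← Real.rpow_one (Real.cosh y + x)]
      rw [← Real.rpow_add (hpos y)]; congr 1; ring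
    have e3 : -(p + 1) - 1 = -(p + 2) := by ring
    rw [e3, e1, e2]
    have := Real.sinh_sq y
    linear_combination (p + 1) * (Real.cosh y + x) ^ (-(p + 2)) * this
  have i0 := hG_int hp hx
  have i1 := hG_int (p := p + 1) (by linarith) hx
  have i2 := hG_int (p := p + 2) (by linarith) hx
  have hz := integral_eq_zero_of_hasDerivAt_of_integrable hderiv
    (((i0.const_mul _).add (i1.const_mul _)).add (i2.const_mul _)) ?_
  · rw [integral_add (f := fun y => -p * (Real.cosh y + x) ^ (-p)
        + (2 * p + 1) * x * (Real.cosh y + x) ^ (-(p + 1)))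
        ((i0.const_mul _).add (i1.const_mul _)) (i2.const_mul _),
      integral_add (i0.const_mul _) (i1.const_mul _), integral_const_mul, integral_const_mul,
      integral_const_mul] at hz
    change -p * hG p x + (2 * p + 1) * x * hG (p + 1) x + (p+1) * (1 - x^2) * hG (p + 2) x = 0 at hz
    linear_combination p * hz
  · refine Integrable.mono' (i0.const_mul 2) ?_ ?_
    · exact (Real.continuous_sinh.mul (hG_cont hx)).aestronglyMeasurable
    · refine Filter.Eventually.of_forall fun y => ?_
      rw [norm_mul, Real.norm_of_nonneg (Real.rpow_nonneg (hpos y).le _)]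
      have e2 : (Real.cosh y + x) ^ (-p) = (Real.cosh y + x) ^ (-(p + 1)) * (Real.cosh y + x) := by
        nth_rewrite 3 [← Real.rpow_one (Real.cosh y + x)]
        rw [← Real.rpow_add (hpos y)]; congr 1; ring
      rw [e2]
      have h3 : ‖Real.sinh y‖ ≤ 2 * (Real.cosh y + x) := by
        have hc := Real.one_le_cosh y
        have : ‖Real.sinh y‖ ≤ Real.cosh y := by
          rw [Real.norm_eq_abs]
          refine abs_le_of_sq_le_sq ?_ (by linarith)
          nlinarith [Real.sinh_sq y]
        linarith
      have := Real.rpow_nonneg (hpos y).le (-(p + 1))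
      nlinarith

lemma hG_zero {p : ℝ} (hp : 0 < p) :
    hG p 0 = 2 ^ (p - 1) * (Real.Gamma (p / 2) ^ 2 / Real.Gamma p) := by
  have hb := ProbabilityTheory.beta_eq_betaIntegralReal (p / 2) (p / 2) (by positivity) (by positivity)
  have h1 : (Complex.betaIntegral (p / 2 : ℝ) (p / 2 : ℝ)).re =
      ∫ u in Ioo (0:ℝ) 1, u ^ (p / 2 - 1) * (1 - u) ^ (p / 2 - 1) := by
    have : Complex.betaIntegral (p / 2 : ℝ) (p / 2 : ℝ) =
        ((∫ u in Ioo (0:ℝ) 1, u ^ (p / 2 - 1) * (1 - u) ^ (p / 2 - 1) : ℝ) : ℂ) := by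
      rw [Complex.betaIntegral, intervalIntegral.integral_of_le zero_le_one,
        ← integral_Ioc_eq_integral_Ioo, ← integral_complex_ofReal]
      refine setIntegral_congr_fun measurableSet_Ioc fun u hu => ?_
      have h0 : 0 ≤ u := hu.1.le
      have h1 : 0 ≤ 1 - u := by linarith [hu.2]
      simp only [Complex.ofReal_mul, Complex.ofReal_cpow h0, Complex.ofReal_cpow h1]
      push_cast
      rfl
    rw [this, Complex.ofReal_re]
  have h2 : ∫ u in Ioo (0:ℝ) 1, u ^ (p / 2 - 1) * (1 - u) ^ (p / 2 - 1) =
      ∫ y : ℝ, 2 * (4 ^ (- (p / 2)) * (Real.cosh y + 0) ^ (-p)) := by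
    have himg : (fun y : ℝ => Real.sigmoid (2 * y)) '' univ = Ioo 0 1 := by
      rw [← Real.range_sigmoid, image_univ]
      exact (Equiv.mulLeft₀ (2:ℝ) two_ne_zero).surjective.range_comp Real.sigmoid
    rw [← himg, integral_image_eq_integral_abs_deriv_smul MeasurableSet.univ
      (f' := fun y => 2 * (Real.sigmoid (2 * y) * (1 - Real.sigmoid (2 * y)))), setIntegral_univ]
    · refine integral_congr_ae (Filter.Eventually.of_forall fun y => ?_)
      have hs := Real.sigmoid_pos (2 * y)
      have hs1 : 0 < 1 - Real.sigmoid (2 * y) := by linarith [Real.sigmoid_lt_one (2 * y)]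
      have hprod : Real.sigmoid (2 * y) * (1 - Real.sigmoid (2 * y)) = (4 * Real.cosh y ^ 2)⁻¹ := by
        rw [← Real.sigmoid_neg, Real.sigmoid_def, Real.sigmoid_def, Real.cosh_eq, ← mul_inv]
        congr 1
        have e1 : Real.exp (-(2 * y)) = Real.exp (-y) ^ 2 := by rw [← Real.exp_nat_mul]; congr 1; push_cast; ring
        have e2 : Real.exp (-(-(2 * y))) = Real.exp y ^ 2 := by rw [← Real.exp_nat_mul]; congr 1; push_cast; ring
        have e3 : Real.exp y * Real.exp (-y) = 1 := by rw [← Real.exp_add]; simp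
        rw [e1, e2]
        linear_combination (Real.exp y * Real.exp (-y) - 1) * e3
      have hc : 0 < Real.cosh y := Real.cosh_pos y
      simp only [smul_eq_mul]
      rw [abs_of_pos (by positivity), ← Real.mul_rpow hs.le hs1.le, mul_assoc,
        show ∀ a : ℝ, 0 < a → a * a ^ (p / 2 - 1) = a ^ (p / 2) from ?_, hprod, Real.inv_rpow (by positivity),
        Real.mul_rpow (by norm_num) (by positivity), ← Real.rpow_natCast, ← Real.rpow_mul hc.le,
        mul_inv, ← Real.rpow_neg (by norm_num), ← Real.rpow_neg hc.le, add_zero]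
      · congr 4
        push_cast; ring
      · positivity
      · intro a ha
        nth_rewrite 1 [← Real.rpow_one a]
        rw [← Real.rpow_add ha]; congr 1; ring
    · intro y _
      have := (Real.hasDerivAt_sigmoid (2 * y)).comp y ((hasDerivAt_id y).const_mul 2)
      refine HasDerivAt.hasDerivWithinAt ?_
      convert! this using 1
      ring
    · intro a _ b _ h
      have := Real.sigmoid_injective h
      linarith
  rw [integral_const_mul, integral_const_mul] at h2
  change _ = 2 * (4 ^ (- (p / 2)) * hG p 0) at h2
  rw [h1, h2, ProbabilityTheory.beta, add_halves, ← sq] at hb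
  rw [hb]
  have e4 : (4:ℝ) ^ (-(p / 2)) = 2 ^ (-p) := by
    rw [show (4:ℝ) = 2 ^ (2:ℝ) by norm_num, ← Real.rpow_mul (by norm_num)]; congr 1; ring
  have e5 : (2:ℝ) ^ (p - 1) * 2 * 2 ^ (-p) = 1 := by
    nth_rewrite 2 [← Real.rpow_one 2]
    rw [← Real.rpow_add (by norm_num), ← Real.rpow_add (by norm_num)]
    simp
  rw [e4]
  linear_combination (-hG p 0) * e5

lemma hG_zero_pos {p : ℝ} (hp : 0 < p) : 0 < hG p 0 := by
  rw [hG_zero hp]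
  have := Real.Gamma_pos_of_pos hp
  have := Real.Gamma_pos_of_pos (half_pos hp)
  positivity

lemma hG_ratio {p : ℝ} (hp : 0 < p) :
    p * hG (p + 1) 0 = 2 * (Real.Gamma ((p + 1) / 2) / Real.Gamma (p / 2)) ^ 2 * hG p 0 := by
  rw [hG_zero hp, hG_zero (by linarith : 0 < p + 1), Real.Gamma_add_one hp.ne']
  have := Real.Gamma_pos_of_pos hp
  have := Real.Gamma_pos_of_pos (half_pos hp)
  have e5 : (2:ℝ) ^ (p + 1 - 1) = 2 * 2 ^ (p - 1) := by
    nth_rewrite 2 [← Real.rpow_one 2]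
    rw [← Real.rpow_add (by norm_num)]; congr 1; ring
  rw [e5]
  field_simp

lemma hG_anti {p x : ℝ} (hp : 0 < p) (hx : 0 ≤ x) : hG p x ≤ hG p 0 := by
  refine integral_mono (hG_int hp (by linarith)) (hG_int hp (by norm_num)) fun y => ?_
  have := Real.cosh_pos y
  exact Real.rpow_le_rpow_of_nonpos (by linarith) (by linarith) (by linarith)

lemma hG_nonneg {p x : ℝ} (hx : 0 ≤ x) : 0 ≤ hG p x := by
  refine integral_nonneg fun y => ?_
  have := Real.cosh_pos y
  exact Real.rpow_nonneg (by linarith) _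

/-- The angular profile near an edge. -/
noncomputable def hpsi (p s : ℝ) : ℝ := Real.cos s ^ p * hG p (Real.sin s)

noncomputable def hpsi1 (p s : ℝ) : ℝ :=
  -p * Real.sin s * Real.cos s ^ (p - 1) * hG p (Real.sin s)
    - p * Real.cos s ^ (p + 1) * hG (p + 1) (Real.sin s)

lemma hpsi_deriv {p s : ℝ} (hp : 0 < p) (hs0 : 0 ≤ s) (hs : s < π / 2) :
    HasDerivAt (hpsi p) (hpsi1 p s) s := by
  have hc : 0 < Real.cos s := Real.cos_pos_of_mem_Ioo ⟨by linarith [Real.pi_pos], hs⟩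
  have hsin : 0 ≤ Real.sin s := Real.sin_nonneg_of_nonneg_of_le_pi hs0 (by linarith [Real.pi_pos])
  have h1 := (Real.hasDerivAt_cos s).rpow_const (p := p) (Or.inl hc.ne')
  have h2 := (hG_hasDerivAt (x := Real.sin s) hp (by linarith)).comp s (Real.hasDerivAt_sin s)
  convert! h1.mul h2 using 1
  simp only [hpsi1, Function.comp]
  rw [Real.rpow_add_one hc.ne']
  ring

lemma hpsi1_deriv {p s : ℝ} (hp : 0 < p) (hs0 : 0 ≤ s) (hs : s < π / 2) :
    HasDerivAt (hpsi1 p) (-(p * (1 - p)) * (1 / Real.cos s ^ 2) * hpsi p s) s := by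
  have hc : 0 < Real.cos s := Real.cos_pos_of_mem_Ioo ⟨by linarith [Real.pi_pos], hs⟩
  have hsin : 0 ≤ Real.sin s := Real.sin_nonneg_of_nonneg_of_le_pi hs0 (by linarith [Real.pi_pos])
  have h1 := (Real.hasDerivAt_cos s).rpow_const (p := p - 1) (Or.inl hc.ne')
  have h1' := (Real.hasDerivAt_cos s).rpow_const (p := p + 1) (Or.inl hc.ne')
  have h2 := (hG_hasDerivAt (x := Real.sin s) hp (by linarith)).comp s (Real.hasDerivAt_sin s)
  have h3 := (hG_hasDerivAt (p := p + 1) (x := Real.sin s) (by linarith) (by linarith)).comp s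
    (Real.hasDerivAt_sin s)
  convert! ((((Real.hasDerivAt_sin s).const_mul (-p)).mul h1).mul h2).sub
    ((h1'.const_mul p).mul h3) using 1
  simp only [hpsi, Function.comp, Pi.mul_apply]
  have ode := hG_ode (x := Real.sin s) hp (by linarith)
  have e1 : Real.cos s ^ (p - 1) = Real.cos s ^ p / Real.cos s := Real.rpow_sub_one hc.ne' p
  have e2 : Real.cos s ^ (p - 1 - 1) = Real.cos s ^ p / Real.cos s / Real.cos s := by
    rw [Real.rpow_sub_one hc.ne', e1]
  have e3 : Real.cos s ^ (p + 1) = Real.cos s ^ p * Real.cos s := Real.rpow_add_one hc.ne' p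
  have e4 : Real.cos s ^ (p + 1 - 1) = Real.cos s ^ p := by rw [add_sub_cancel_right]
  have e5 : p + 1 + 1 = p + 2 := by ring
  rw [e1, e2, e3, e4, e5]
  have sc := Real.sin_sq_add_cos_sq s
  generalize Real.cos s ^ p = K at *
  generalize hG p (Real.sin s) = g0 at *
  generalize hG (p + 1) (Real.sin s) = g1 at *
  generalize hG (p + 2) (Real.sin s) = g2 at *
  generalize Real.sin s = x at *
  generalize Real.cos s = k at *
  have ode' : g2 * (p * (p + 1) * k ^ 2) = p ^ 2 * g0 - (1 + 2 * p) * x * p * g1 := by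
    linear_combination ode + g2 * p * (p + 1) * sc
  clear hp
  field_simp
  linear_combination (-K * k ^ 2) * ode' - (K * g0 * p * (p - 1)) * sc


lemma hInt_of_cont {h : ℝ → ℝ} {a b : ℝ} (hc : ContinuousOn h (Icc a b))
    (hz : ∀ x, x ∉ Icc a b → h x = 0) : Integrable h := by
  refine (integrableOn_iff_integrable_of_support_subset ?_).1 hc.integrableOn_Icc
  intro x hx
  by_contra h'
  exact hx (hz x h')

lemma hDeriv_zero {g : ℝ → ℝ} {a b : ℝ} (hz : ∀ x, x ∉ Icc a b → g x = 0) :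
    ∀ x, x ∉ Icc a b → deriv g x = 0 := by
  intro x hx
  have : g =ᶠ[nhds x] fun _ => 0 := by
    filter_upwards [isClosed_Icc.isOpen_compl.mem_nhds hx] with y hy
    exact hz y hy
  rw [this.deriv_eq]
  simp

lemma hIntegral_log (G : ℝ → ℝ) : ∫ r in Ioi (0:ℝ), G (Real.log r) / r = ∫ t, G t := by
  have h := integral_image_eq_integral_abs_deriv_smul (s := univ) (f := Real.exp) (f' := Real.exp)
    MeasurableSet.univ (fun x _ => (Real.hasDerivAt_exp x).hasDerivWithinAt)
    (Real.exp_injective.injOn) (fun r => G (Real.log r) / r)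
  rw [image_univ, Real.range_exp, setIntegral_univ] at h
  rw [h]
  refine integral_congr_ae (Filter.Eventually.of_forall fun t => ?_)
  have := Real.exp_pos t
  simp only [abs_of_pos this, Real.log_exp, smul_eq_mul]
  field_simp

lemma hRadial {η ε : ℝ} (hη : 0 < η) (hε : 0 < ε) :
    ∃ g : ℝ → ℝ, ∃ r1 r2 : ℝ, ContDiff ℝ (⊤ : ℕ∞) g ∧ 0 < r1 ∧ r2 < ε ∧
      (∀ r, r ∉ Icc r1 r2 → g r = 0) ∧
      ∫ r in Ioi (0:ℝ), r * (deriv g r) ^ 2 < η * ∫ r in Ioi (0:ℝ), g r ^ 2 / r := by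
  let φ : ContDiffBump (0:ℝ) := ⟨1, 2, by norm_num, by norm_num⟩
  have hφs : ContDiff ℝ (⊤ : ℕ∞) (φ : ℝ → ℝ) := φ.contDiff
  have hφz : ∀ x, x ∉ Icc (-2:ℝ) 2 → φ x = 0 := by
    intro x hx
    apply φ.zero_of_le_dist
    rw [dist_zero_right, Real.norm_eq_abs]
    by_contra h
    exact hx (abs_le.1 (not_le.1 h).le)
  set A := ∫ t, (deriv φ t) ^ 2 with hA
  set B := ∫ t, (φ t) ^ 2 with hB
  have hBpos : 0 < B := by
    have hi : Integrable (fun t => (φ t) ^ 2) :=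
      hInt_of_cont (a := -2) (b := 2) (hφs.continuous.pow 2).continuousOn
        (fun x hx => by simp [hφz x hx])
    rw [hB, integral_pos_iff_support_of_nonneg (fun t => sq_nonneg _) hi]
    refine lt_of_lt_of_le ?_ (measure_mono (?_ : Metric.ball (0:ℝ) 1 ⊆ _))
    · exact Metric.measure_ball_pos _ _ one_pos
    · intro x hx
      have : φ x ≠ 0 := by
        have := φ.pos_of_mem_ball (x := x) (Metric.ball_subset_ball (by norm_num : (1:ℝ) ≤ 2) hx)
        exact this.ne'
      simpa using this
  have hA0 : 0 ≤ A := integral_nonneg fun t => sq_nonneg _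
  set R := A / (η * B) + 1 with hR
  have hR1 : 1 ≤ R := by
    have : 0 ≤ A / (η * B) := by positivity
    linarith
  have hR0 : 0 < R := by linarith
  set S := 2 * R - Real.log ε + 1 with hS
  let χ : ℝ → ℝ := fun t => φ (R⁻¹ * (t + S))
  have hχs : ContDiff ℝ (⊤ : ℕ∞) χ := hφs.comp (by fun_prop)
  have hχz : ∀ t, t ∉ Icc (-S - 2 * R) (-S + 2 * R) → χ t = 0 := by
    intro t ht
    apply hφz
    intro h
    apply ht
    have e : R * (R⁻¹ * (t + S)) = t + S := by field_simp
    constructor <;> nlinarith [h.1, h.2]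
  have hχd : ∀ t, deriv χ t = R⁻¹ * deriv φ (R⁻¹ * (t + S)) := by
    intro t
    have h1 : HasDerivAt (fun t => R⁻¹ * (t + S)) R⁻¹ t := by
      simpa using ((hasDerivAt_id t).add_const S).const_mul R⁻¹
    have h2 := ((hφs.differentiable (by simp)) (R⁻¹ * (t + S))).hasDerivAt
    have := (h2.comp t h1).deriv
    rw [mul_comm] at this
    exact this
  have hI : ∀ F : ℝ → ℝ, ∫ t, F (R⁻¹ * (t + S)) = R * ∫ t, F t := by
    intro F
    rw [integral_add_right_eq_self (fun t => F (R⁻¹ * t)) S, Measure.integral_comp_mul_left]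
    simp [abs_of_pos hR0]
  let g : ℝ → ℝ := fun r => if r ≤ 0 then 0 else χ (Real.log r)
  have hgz : ∀ r, r ∉ Icc (Real.exp (-S - 2 * R)) (Real.exp (-S + 2 * R)) → g r = 0 := by
    intro r hr
    simp only [g]
    split_ifs with h
    · rfl
    · push Not at h
      apply hχz
      intro h'
      apply hr
      constructor
      · rw [← Real.exp_log h]; exact Real.exp_le_exp.2 h'.1
      · rw [← Real.exp_log h]; exact Real.exp_le_exp.2 h'.2
  have hgpos : ∀ r, 0 < r → g =ᶠ[nhds r] fun r => χ (Real.log r) := by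
    intro r hr
    filter_upwards [Ioi_mem_nhds hr] with y hy
    simp [g, not_le.2 (show 0 < y from hy)]
  refine ⟨g, Real.exp (-S - 2 * R), Real.exp (-S + 2 * R), ?_, Real.exp_pos _, ?_, hgz, ?_⟩
  · rw [contDiff_iff_contDiffAt]
    intro r
    rcases lt_or_ge 0 r with hr | hr
    · refine ContDiffAt.congr_of_eventuallyEq ?_ (hgpos r hr)
      exact hχs.contDiffAt.comp r (Real.contDiffAt_log.2 hr.ne')
    · refine ContDiffAt.congr_of_eventuallyEq (contDiffAt_const (c := (0:ℝ))) ?_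
      have hr' : r < Real.exp (-S - 2 * R) := lt_of_le_of_lt hr (Real.exp_pos _)
      filter_upwards [Iio_mem_nhds hr'] with y hy
      exact hgz y (fun h => absurd h.1 (not_le.2 hy))
  · rw [← Real.lt_log_iff_exp_lt hε]
    linarith
  · have e1 : ∫ r in Ioi (0:ℝ), r * (deriv g r) ^ 2 = ∫ t, (deriv χ t) ^ 2 := by
      rw [← hIntegral_log]
      refine setIntegral_congr_fun measurableSet_Ioi fun r hr => ?_
      have hr0 : 0 < r := hr
      have h1 : deriv g r = deriv χ (Real.log r) * r⁻¹ := by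
        rw [(hgpos r hr).deriv_eq]
        exact (((hχs.differentiable (by simp)) (Real.log r)).hasDerivAt.comp r
          (Real.hasDerivAt_log hr0.ne')).deriv
      simp only [h1]
      field_simp
    have e2 : ∫ r in Ioi (0:ℝ), g r ^ 2 / r = ∫ t, (χ t) ^ 2 := by
      rw [← hIntegral_log]
      refine setIntegral_congr_fun measurableSet_Ioi fun r hr => ?_
      simp only [(hgpos r hr).eq_of_nhds]
    have e3 : ∫ t, (deriv χ t) ^ 2 = R⁻¹ * A := by
      simp_rw [hχd, mul_pow]
      rw [integral_const_mul, hI (fun t => deriv φ t ^ 2), ← hA]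
      field_simp
    have e4 : ∫ t, (χ t) ^ 2 = R * B := hI (fun t => φ t ^ 2)
    rw [e1, e2, e3, e4]
    have h5 : A < η * B * R := by
      have : η * B * R = A + η * B := by rw [hR]; field_simp
      have : 0 < η * B := by positivity
      linarith
    have h6 : R⁻¹ * A ≤ A := mul_le_of_le_one_left hA0 (inv_le_one_of_one_le₀ hR1)
    linarith

/-- The angular potential. -/
noncomputable def hV (m θ : ℝ) : ℝ := 1 / Real.cos (max (|θ| - m) 0) ^ 2

lemma hV_cont {m : ℝ} : ContinuousOn (hV m) (Ioo (-(m + π / 2)) (m + π / 2)) := by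
  unfold hV
  refine ContinuousOn.div continuousOn_const (Continuous.continuousOn (by fun_prop)) ?_
  intro θ hθ
  have h1 : |θ| < m + π / 2 := abs_lt.2 hθ
  have : 0 < Real.cos (max (|θ| - m) 0) := by
    apply Real.cos_pos_of_mem_Ioo
    constructor
    · have := le_max_right (|θ| - m) 0
      linarith [Real.pi_pos]
    · exact max_lt (by linarith) (by linarith [Real.pi_pos])
  positivity

lemma hAng1 {m c : ℝ} (hm : 0 < m) (hc : 1 / 4 < c) :
    ∃ f : ℝ → ℝ, ∃ a : ℝ, ContDiff ℝ (⊤ : ℕ∞) f ∧ 0 < a ∧ a < m + π / 2 ∧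
      (∀ θ, θ ∉ Icc (-a) a → f θ = 0) ∧
      ∫ θ, (deriv f θ) ^ 2 < c * ∫ θ, f θ ^ 2 * hV m θ := by
  obtain ⟨g, r1, r2, hgs, hr1, hr2, hgz, hlt⟩ :=
    hRadial (η := c - 1 / 4) (ε := π / 2) (by linarith) (by linarith [Real.pi_pos])
  have hgd : Differentiable ℝ g := hgs.differentiable (by simp)
  have hgc := hgs.continuous
  have hgc' : Continuous (deriv g) := hgs.continuous_deriv (by simp)
  have hgz' := hDeriv_zero hgz
  let F : ℝ → ℝ := fun τ => Real.sqrt τ * g τ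
  have hFz : ∀ τ, τ ∉ Icc r1 r2 → F τ = 0 := fun τ hτ => by simp [F, hgz τ hτ]
  have hFs : ContDiff ℝ (⊤ : ℕ∞) F := by
    rw [contDiff_iff_contDiffAt]
    intro r
    rcases lt_or_ge 0 r with hr | hr
    · exact (Real.contDiffAt_sqrt hr.ne').mul hgs.contDiffAt
    · refine ContDiffAt.congr_of_eventuallyEq (contDiffAt_const (c := (0:ℝ))) ?_
      have hr' : r < r1 := lt_of_le_of_lt hr hr1
      filter_upwards [Iio_mem_nhds hr'] with y hy
      exact hFz y (fun h => absurd h.1 (not_le.2 hy))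
  have hFz' := hDeriv_zero hFz
  have hr12 : r1 ≤ r2 := by
    by_contra hcon
    have : ∀ r, g r = 0 := fun r => hgz r (fun h => hcon (h.1.trans h.2))
    have h0 : deriv g = 0 := by
      have : g = fun _ => 0 := funext this
      rw [this]; ext; simp
    simp [this, h0] at hlt
  let f : ℝ → ℝ := fun θ => F (m + π / 2 - θ)
  have hfd : ∀ θ, deriv f θ = - deriv F (m + π / 2 - θ) := fun θ => deriv_comp_const_sub (f := F) _ _
  refine ⟨f, m + π / 2 - r1, hFs.comp (by fun_prop), by linarith, by linarith, ?_, ?_⟩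
  · intro θ hθ
    apply hFz
    intro h
    apply hθ
    constructor <;> linarith [h.1, h.2]
  · have i1 : Integrable (fun τ => g τ ^ 2 / τ) := by
      refine hInt_of_cont (a := r1) (b := r2) ?_ (fun x hx => by simp [hgz x hx])
      exact ContinuousOn.div (by fun_prop) continuousOn_id (fun x hx => (hr1.trans_le hx.1).ne')
    have i2 : Integrable (fun τ => τ * deriv g τ ^ 2) :=
      hInt_of_cont (a := r1) (b := r2) (Continuous.continuousOn (by fun_prop))
        (fun x hx => by simp [hgz' x hx])
    have i3 : Integrable (fun τ => g τ * deriv g τ) :=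
      hInt_of_cont (a := r1) (b := r2) (Continuous.continuousOn (by fun_prop))
        (fun x hx => by simp [hgz' x hx])
    have h3 : ∫ τ, g τ * deriv g τ = 0 := by
      refine integral_eq_zero_of_hasDerivAt_of_integrable (f := fun τ => g τ ^ 2 / 2) ?_ i3 ?_
      · intro x
        have := ((hgd x).hasDerivAt.pow 2).div_const 2
        convert! this using 1
        simp
        ring
      · exact hInt_of_cont (a := r1) (b := r2) (Continuous.continuousOn (by fun_prop))
          (fun x hx => by simp [hgz x hx])
    have hset : ∀ h : ℝ → ℝ, (∀ x, x ∉ Icc r1 r2 → h x = 0) → ∫ x in Ioi (0:ℝ), h x = ∫ x, h x := by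
      intro h hh
      refine setIntegral_eq_integral_of_forall_compl_eq_zero fun x hx => hh x fun hx' => hx ?_
      exact hr1.trans_le hx'.1
    rw [hset _ (fun x hx => by simp [hgz' x hx]), hset _ (fun x hx => by simp [hgz x hx])] at hlt
    have e1 : ∫ θ, (deriv f θ) ^ 2 = ∫ τ, (deriv F τ) ^ 2 := by
      simp_rw [hfd, neg_sq]
      exact integral_sub_left_eq_self (fun τ => deriv F τ ^ 2) volume (m + π / 2)
    have e2 : ∀ τ, deriv F τ ^ 2 = 1 / 4 * (g τ ^ 2 / τ) + τ * deriv g τ ^ 2 + g τ * deriv g τ := by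
      intro τ
      by_cases hτ : τ ∈ Icc r1 r2
      · have h0 : 0 < τ := hr1.trans_le hτ.1
        have : HasDerivAt F (1 / (2 * Real.sqrt τ) * g τ + Real.sqrt τ * deriv g τ) τ :=
          (Real.hasDerivAt_sqrt h0.ne').mul (hgd τ).hasDerivAt
        rw [this.deriv]
        have hs : 0 < Real.sqrt τ := Real.sqrt_pos.2 h0
        obtain ⟨s, hs', rfl⟩ : ∃ s : ℝ, 0 < s ∧ τ = s ^ 2 := ⟨Real.sqrt τ, hs, (Real.sq_sqrt h0.le).symm⟩
        rw [Real.sqrt_sq hs'.le]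
        field_simp
        ring
      · simp [hgz τ hτ, hgz' τ hτ, hFz' τ hτ]
    have e3 : ∫ τ, (deriv F τ) ^ 2 = 1 / 4 * (∫ τ, g τ ^ 2 / τ) + ∫ τ, τ * deriv g τ ^ 2 := by
      simp_rw [e2]
      rw [integral_add (f := fun τ => 1 / 4 * (g τ ^ 2 / τ) + τ * deriv g τ ^ 2)
        ((i1.const_mul _).add i2) i3, integral_add (i1.const_mul _) i2, h3,
        integral_const_mul, add_zero]
    have hsupp : ∀ θ, θ ∉ Icc (m + π / 2 - r2) (m + π / 2 - r1) → f θ = 0 := by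
      intro θ hθ
      apply hFz
      intro h
      apply hθ
      constructor <;> linarith [h.1, h.2]
    have i4 : Integrable (fun θ => f θ ^ 2 * hV m θ) := by
      refine hInt_of_cont (a := m + π / 2 - r2) (b := m + π / 2 - r1) ?_
        (fun x hx => by simp [hsupp x hx])
      refine ContinuousOn.mul ?_ (hV_cont.mono ?_)
      · have : ContDiff ℝ (⊤ : ℕ∞) f := hFs.comp (by fun_prop)
        exact (this.continuous.pow 2).continuousOn
      · intro x hx
        constructor <;> linarith [hx.1, hx.2, Real.pi_pos]
    have e4 : ∫ τ, g τ ^ 2 / τ ≤ ∫ θ, f θ ^ 2 * hV m θ := by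
      rw [← integral_sub_left_eq_self (fun τ => g τ ^ 2 / τ) volume (m + π / 2)]
      refine integral_mono (i1.comp_sub_left (m + π / 2)) i4 fun θ => ?_
      by_cases hθ : θ ∈ Icc (m + π / 2 - r2) (m + π / 2 - r1)
      · have hτ0 : 0 < m + π / 2 - θ := by linarith [hθ.2]
        have hτ1 : m + π / 2 - θ < π / 2 := by linarith [hθ.1]
        simp only [f, F, mul_pow]
        rw [Real.sq_sqrt hτ0.le, hV, abs_of_pos (by linarith [Real.pi_pos]), max_eq_left (by linarith)]
        have : Real.cos (θ - m) = Real.sin (m + π / 2 - θ) := by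
          rw [← Real.cos_pi_div_two_sub]; congr 1; ring
        rw [this]
        set τ := m + π / 2 - θ
        have hs : 0 < Real.sin τ := Real.sin_pos_of_pos_of_lt_pi hτ0 (by linarith [Real.pi_pos])
        have hs' : Real.sin τ ≤ τ := Real.sin_le hτ0.le
        have h1 : 1 / τ ^ 2 ≤ 1 / Real.sin τ ^ 2 :=
          one_div_le_one_div_of_le (by positivity) (pow_le_pow_left₀ hs.le hs' 2)
        calc g τ ^ 2 / τ = τ * g τ ^ 2 * (1 / τ ^ 2) := by field_simp
          _ ≤ _ := mul_le_mul_of_nonneg_left h1 (by positivity)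
      · have : g (m + π / 2 - θ) = 0 := by
          apply hgz
          intro h
          apply hθ
          constructor <;> linarith [h.1, h.2]
        simp [this, hsupp θ hθ]
    rw [e1, e3]
    have : c * ∫ τ, g τ ^ 2 / τ ≤ c * ∫ θ, f θ ^ 2 * hV m θ :=
      mul_le_mul_of_nonneg_left e4 (by linarith)
    linarith


lemma hApprox {a c : ℝ} (ha : 0 < a) {Φ Φ1 χ V : ℝ → ℝ}
    (hΦ : ∀ x ∈ Icc (-a) a, HasDerivAt Φ (Φ1 x) x) (hΦ1 : ContinuousOn Φ1 (Icc (-a) a))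
    (hχ : ContDiff ℝ (⊤ : ℕ∞) χ) (hχz : ∀ x, x ∉ Icc (-a) a → χ x = 0)
    (hV : ContinuousOn V (Icc (-a) a))
    (hlt : ∫ x in (-a)..a, ((Φ1 x * χ x + Φ x * deriv χ x) ^ 2 - c * ((Φ x * χ x) ^ 2 * V x)) < 0) :
    ∃ f : ℝ → ℝ, ContDiff ℝ (⊤ : ℕ∞) f ∧ (∀ θ, θ ∉ Icc (-a) a → f θ = 0) ∧
      ∫ θ, (deriv f θ) ^ 2 < c * ∫ θ, f θ ^ 2 * V θ := by
  have hχc := hχ.continuous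
  have hχc' : Continuous (deriv χ) := hχ.continuous_deriv (by simp)
  have hχd : Differentiable ℝ χ := hχ.differentiable (by simp)
  have hΦc : ContinuousOn Φ (Icc (-a) a) := fun x hx => (hΦ x hx).continuousAt.continuousWithinAt
  have hn : ∀ n : ℕ, (0:ℝ) < 1 / ((n:ℝ) + 1) := fun n => Nat.one_div_pos_of_nat
  choose p hp using fun n : ℕ => exists_polynomial_near_of_continuousOn (-a) a Φ1 hΦ1
    (1 / ((n:ℝ) + 1)) (hn n)
  let P : ℕ → ℝ → ℝ := fun n x => Φ 0 + ∫ t in (0:ℝ)..x, (p n).eval t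
  have hPd : ∀ n x, HasDerivAt (P n) ((p n).eval x) x := by
    intro n x
    exact (intervalIntegral.integral_hasDerivAt_right
      ((p n).continuous.intervalIntegrable _ _)
      ((p n).continuous.stronglyMeasurableAtFilter _ _) (p n).continuous.continuousAt).const_add _
  have hPs : ∀ n, ContDiff ℝ (⊤ : ℕ∞) (P n) := by
    intro n
    rw [contDiff_infty_iff_deriv]
    refine ⟨fun x => (hPd n x).differentiableAt, ?_⟩
    have : deriv (P n) = fun x => (p n).eval x := funext fun x => (hPd n x).deriv
    rw [this]
    simpa using Polynomial.contDiff_aeval (𝕜 := ℝ) (p n) (⊤ : ℕ∞)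
  have hPc : ∀ n, Continuous (P n) := fun n => (hPs n).continuous
  have hPn : ∀ n, ∀ x ∈ Icc (-a) a, |P n x - Φ x| ≤ 1 / ((n:ℝ) + 1) * a := by
    intro n x hx
    have hsub : uIcc 0 x ⊆ Icc (-a) a := uIcc_subset_Icc ⟨by linarith, ha.le⟩ hx
    have hi : IntervalIntegrable Φ1 volume 0 x := (hΦ1.mono hsub).intervalIntegrable
    have h1 : ∫ t in (0:ℝ)..x, Φ1 t = Φ x - Φ 0 :=
      intervalIntegral.integral_eq_sub_of_hasDerivAt (fun t ht => hΦ t (hsub ht)) hi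
    have h2 : P n x - Φ x = ∫ t in (0:ℝ)..x, ((p n).eval t - Φ1 t) := by
      rw [intervalIntegral.integral_sub ((p n).continuous.intervalIntegrable _ _) hi, h1]
      simp only [P]; ring
    rw [h2, ← Real.norm_eq_abs]
    refine (intervalIntegral.norm_integral_le_of_norm_le_const (C := 1 / ((n:ℝ) + 1)) ?_).trans ?_
    · intro t ht
      exact (hp n t (hsub (uIoc_subset_uIcc ht))).le
    · refine mul_le_mul_of_nonneg_left ?_ (hn n).le
      rw [sub_zero]; exact abs_le.2 hx
  have ht0 : Filter.Tendsto (fun n : ℕ => 1 / ((n:ℝ) + 1)) Filter.atTop (nhds 0) :=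
    tendsto_one_div_add_atTop_nhds_zero_nat
  have htp : ∀ x ∈ Icc (-a) a, Filter.Tendsto (fun n => (p n).eval x) Filter.atTop (nhds (Φ1 x)) := by
    intro x hx
    rw [tendsto_iff_dist_tendsto_zero]
    exact squeeze_zero (fun _ => dist_nonneg) (fun n => (hp n x hx).le) ht0
  have htP : ∀ x ∈ Icc (-a) a, Filter.Tendsto (fun n => P n x) Filter.atTop (nhds (Φ x)) := by
    intro x hx
    rw [tendsto_iff_dist_tendsto_zero]
    refine squeeze_zero (fun _ => dist_nonneg) (fun n => hPn n x hx) ?_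
    simpa using ht0.mul_const a
  have hle1 : ∀ n : ℕ, 1 / ((n:ℝ) + 1) ≤ 1 := by
    intro n
    rw [div_le_one (by positivity)]
    linarith [n.cast_nonneg (α := ℝ)]
  have huIoc : uIoc (-a) a ⊆ Icc (-a) a := by
    rw [uIoc_of_le (by linarith)]; exact Ioc_subset_Icc_self
  have hcontP : ∀ n, ContinuousOn (fun x => ((p n).eval x * χ x + P n x * deriv χ x) ^ 2
      - c * ((P n x * χ x) ^ 2 * V x)) (Icc (-a) a) := by
    intro n
    have h1 : ContinuousOn (fun x => (p n).eval x) (Icc (-a) a) := (p n).continuous.continuousOn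
    have h2 := (hPc n).continuousOn (s := Icc (-a) a)
    have h3 := hχc.continuousOn (s := Icc (-a) a)
    have h4 := hχc'.continuousOn (s := Icc (-a) a)
    fun_prop
  have hbound : ContinuousOn (fun x => ((|Φ1 x| + 1) * |χ x| + (|Φ x| + a) * |deriv χ x|) ^ 2
      + |c| * (((|Φ x| + a) * |χ x|) ^ 2 * |V x|)) (Icc (-a) a) := by
    have h3 := hχc.continuousOn (s := Icc (-a) a)
    have h4 := hχc'.continuousOn (s := Icc (-a) a)
    fun_prop
  have hlim := intervalIntegral.tendsto_integral_filter_of_dominated_convergence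
    (μ := volume) (a := -a) (b := a) (l := Filter.atTop)
    (F := fun n x => ((p n).eval x * χ x + P n x * deriv χ x) ^ 2 - c * ((P n x * χ x) ^ 2 * V x))
    (f := fun x => (Φ1 x * χ x + Φ x * deriv χ x) ^ 2 - c * ((Φ x * χ x) ^ 2 * V x))
    (fun x => ((|Φ1 x| + 1) * |χ x| + (|Φ x| + a) * |deriv χ x|) ^ 2
      + |c| * (((|Φ x| + a) * |χ x|) ^ 2 * |V x|)) ?_ ?_ ?_ ?_
  · obtain ⟨n, hn'⟩ := (hlim.eventually (gt_mem_nhds hlt)).exists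
    have hfs : ContDiff ℝ (⊤ : ℕ∞) (fun x => P n x * χ x) := (hPs n).mul hχ
    have hfz : ∀ θ, θ ∉ Icc (-a) a → P n θ * χ θ = 0 := fun θ hθ => by simp [hχz θ hθ]
    have hfd : ∀ x, deriv (fun x => P n x * χ x) x = (p n).eval x * χ x + P n x * deriv χ x :=
      fun x => ((hPd n x).mul (hχd x).hasDerivAt).deriv
    refine ⟨fun x => P n x * χ x, hfs, hfz, ?_⟩
    have hfz' := hDeriv_zero hfz
    have i1 : Integrable (fun θ => (deriv (fun x => P n x * χ x) θ) ^ 2) :=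
      hInt_of_cont (((hfs.continuous_deriv (by simp)).pow 2).continuousOn)
        (fun x hx => by rw [hfz' x hx]; simp)
    have i2 : Integrable (fun θ => (P n θ * χ θ) ^ 2 * V θ) :=
      hInt_of_cont ((hfs.continuous.pow 2).continuousOn.mul hV)
        (fun x hx => by rw [hfz x hx]; simp)
    have h7 : (∫ θ, (deriv (fun x => P n x * χ x) θ) ^ 2) - c * ∫ θ, (P n θ * χ θ) ^ 2 * V θ < 0 := by
      rw [← integral_const_mul, ← integral_sub i1 (i2.const_mul c),
        ← setIntegral_eq_integral_of_forall_compl_eq_zero (s := Icc (-a) a)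
          (fun x hx => by rw [hfz' x hx, hfz x hx]; simp),
        integral_Icc_eq_integral_Ioc, ← intervalIntegral.integral_of_le (by linarith)]
      simp_rw [hfd]
      exact hn'
    linarith
  · refine Filter.Eventually.of_forall fun n => ?_
    exact ((hcontP n).mono huIoc).aestronglyMeasurable measurableSet_uIoc
  · refine Filter.Eventually.of_forall fun n => Filter.Eventually.of_forall fun x hx => ?_
    have hx' := huIoc hx
    have b1 : |(p n).eval x| ≤ |Φ1 x| + 1 := by
      have := (hp n x hx').le.trans (hle1 n)
      have h := abs_add_le (Φ1 x) ((p n).eval x - Φ1 x)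
      rw [add_sub_cancel] at h
      linarith
    have b2 : |P n x| ≤ |Φ x| + a := by
      have h3 := (hPn n x hx').trans (mul_le_of_le_one_left ha.le (hle1 n))
      have h := abs_add_le (Φ x) (P n x - Φ x)
      rw [add_sub_cancel] at h
      linarith
    have b3 : |(p n).eval x * χ x + P n x * deriv χ x| ≤
        (|Φ1 x| + 1) * |χ x| + (|Φ x| + a) * |deriv χ x| := by
      refine (abs_add_le _ _).trans ?_
      rw [abs_mul, abs_mul]
      gcongr
    have b4 : |P n x * χ x| ≤ (|Φ x| + a) * |χ x| := by
      rw [abs_mul]; gcongr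
    rw [Real.norm_eq_abs]
    refine (abs_sub _ _).trans ?_
    rw [abs_mul, abs_mul, abs_pow, abs_pow]
    gcongr
  · exact ContinuousOn.intervalIntegrable (by rwa [uIcc_of_le (by linarith)])
  · refine Filter.Eventually.of_forall fun x hx => ?_
    have hx' := huIoc hx
    exact ((((htp x hx').mul_const _).add ((htP x hx').mul_const _)).pow 2).sub
      (((((htP x hx').mul_const _).pow 2).mul_const _).const_mul c)

lemma hST_deriv_zero {x : ℝ} (hx : 1 ≤ x) : deriv Real.smoothTransition x = 0 := by
  apply IsLocalMax.deriv_eq_zero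
  refine Filter.Eventually.of_forall fun y => ?_
  rw [Real.smoothTransition.one_of_one_le hx]
  exact Real.smoothTransition.le_one y

lemma hST_deriv_bound : ∃ C : ℝ, 0 ≤ C ∧ ∀ x, |deriv Real.smoothTransition x| ≤ C := by
  have hs : ContDiff ℝ (⊤ : ℕ∞) Real.smoothTransition := Real.smoothTransition.contDiff
  obtain ⟨C, hC⟩ := (isCompact_Icc (a := (0:ℝ)) (b := 1)).exists_bound_of_continuousOn
    (hs.continuous_deriv (by simp)).continuousOn
  refine ⟨C, (norm_nonneg _).trans (hC 0 (by simp)), fun x => ?_⟩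
  have hC0 : 0 ≤ C := (norm_nonneg _).trans (hC 0 (by simp))
  rcases le_or_gt 1 x with h | h
  · rw [hST_deriv_zero h]; simpa
  rcases lt_or_ge x 0 with h' | h'
  · have : deriv Real.smoothTransition x = 0 := by
      apply IsLocalMin.deriv_eq_zero
      refine Filter.Eventually.of_forall fun y => ?_
      rw [Real.smoothTransition.zero_of_nonpos h'.le]
      exact Real.smoothTransition.nonneg y
    rw [this]; simpa
  · exact hC x ⟨h', h.le⟩

lemma hCutoff {b δ : ℝ} (hδ : 0 < δ) :
    ContDiff ℝ (⊤ : ℕ∞) (fun x => Real.smoothTransition ((b - x) / δ - 1) *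
      Real.smoothTransition ((b + x) / δ - 1)) := by
  have hs : ContDiff ℝ (⊤ : ℕ∞) Real.smoothTransition := Real.smoothTransition.contDiff
  exact (hs.comp (by fun_prop)).mul (hs.comp (by fun_prop))

lemma hCutoff_exists : ∃ C : ℝ, 0 ≤ C ∧ ∀ b δ : ℝ, 0 < δ → ∃ χ : ℝ → ℝ,
    ContDiff ℝ (⊤ : ℕ∞) χ ∧ (∀ x, x ∉ Ioo (-(b - δ)) (b - δ) → χ x = 0) ∧
    (∀ x ∈ Icc (-(b - 2 * δ)) (b - 2 * δ), χ x = 1 ∧ deriv χ x = 0) ∧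
    (∀ x, |deriv χ x| ≤ C / δ) := by
  obtain ⟨C, hC0, hC⟩ := hST_deriv_bound
  refine ⟨2 * C, by positivity, fun b δ hδ => ?_⟩
  have hs : ContDiff ℝ (⊤ : ℕ∞) Real.smoothTransition := Real.smoothTransition.contDiff
  have hd : Differentiable ℝ Real.smoothTransition := hs.differentiable (by simp)
  have hdχ : ∀ x, deriv (fun x => Real.smoothTransition ((b - x) / δ - 1) *
      Real.smoothTransition ((b + x) / δ - 1)) x =
      (deriv Real.smoothTransition ((b - x) / δ - 1) * (-1 / δ)) *
        Real.smoothTransition ((b + x) / δ - 1) +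
      Real.smoothTransition ((b - x) / δ - 1) *
        (deriv Real.smoothTransition ((b + x) / δ - 1) * (1 / δ)) := by
    intro x
    have h1 : HasDerivAt (fun x => (b - x) / δ - 1) (-1 / δ) x :=
      (((hasDerivAt_id x).const_sub b).div_const δ).sub_const 1
    have h2 : HasDerivAt (fun x => (b + x) / δ - 1) (1 / δ) x :=
      (((hasDerivAt_id x).const_add b).div_const δ).sub_const 1
    exact (((hd _).hasDerivAt.comp x h1).mul ((hd _).hasDerivAt.comp x h2)).deriv
  refine ⟨_, hCutoff (b := b) hδ, ?_, ?_, ?_⟩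
  · intro x hx
    by_cases h : x < b - δ
    · have h' : b + x ≤ δ := by
        by_contra hh
        exact hx ⟨by linarith, h⟩
      have : (b + x) / δ - 1 ≤ 0 := by
        rw [sub_nonpos, div_le_one hδ]; exact h'
      simp [Real.smoothTransition.zero_of_nonpos this]
    · have : (b - x) / δ - 1 ≤ 0 := by
        rw [sub_nonpos, div_le_one hδ]; linarith
      simp [Real.smoothTransition.zero_of_nonpos this]
  · intro x hx
    have h1 : 1 ≤ (b - x) / δ - 1 := by
      rw [le_sub_iff_add_le, le_div_iff₀ hδ]; linarith [hx.2]
    have h2 : 1 ≤ (b + x) / δ - 1 := by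
      rw [le_sub_iff_add_le, le_div_iff₀ hδ]; linarith [hx.1]
    rw [hdχ]
    simp [Real.smoothTransition.one_of_one_le h1, Real.smoothTransition.one_of_one_le h2,
      hST_deriv_zero h1, hST_deriv_zero h2]
  · intro x
    rw [hdχ]
    refine (abs_add_le _ _).trans ?_
    have e1 : |(-1) / δ| = 1 / δ := by rw [abs_div, abs_neg, abs_one, abs_of_pos hδ]
    have e2 : |1 / δ| = 1 / δ := abs_of_pos (by positivity)
    rw [abs_mul, abs_mul, abs_mul, abs_mul, e1, e2, abs_of_nonneg (Real.smoothTransition.nonneg _),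
      abs_of_nonneg (Real.smoothTransition.nonneg _)]
    have k1 := hC ((b - x) / δ - 1)
    have k2 := hC ((b + x) / δ - 1)
    have k3 := Real.smoothTransition.le_one ((b - x) / δ - 1)
    have k4 := Real.smoothTransition.le_one ((b + x) / δ - 1)
    have k5 := Real.smoothTransition.nonneg ((b - x) / δ - 1)
    have k6 := Real.smoothTransition.nonneg ((b + x) / δ - 1)
    calc _ ≤ (C * (1 / δ)) * 1 + 1 * (C * (1 / δ)) := by gcongr
      _ = 2 * C / δ := by ring

lemma hAng2abs {b c c0 α K : ℝ} (hb : 0 < b) (hc : c0 < c) (hα : 1 / 2 < α) (hK : 0 ≤ K)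
    {Φ Φ1 V : ℝ → ℝ}
    (hΦ : ∀ x, -b < x → x < b → HasDerivAt Φ (Φ1 x) x)
    (hΦ1 : ∀ x, -b < x → x < b → HasDerivAt Φ1 (-c0 * V x * Φ x) x)
    (hV : ContinuousOn V (Ioo (-b) b)) (hV0 : ∀ x, 0 ≤ V x) (hVpos : 0 < V 0) (hΦ0 : Φ 0 ≠ 0)
    (hbd : ∀ x, -b < x → x < b → Φ x ^ 2 ≤ K * (b - |x|) ^ (2 * α)) :
    ∃ f : ℝ → ℝ, ∃ a : ℝ, ContDiff ℝ (⊤ : ℕ∞) f ∧ 0 < a ∧ a < b ∧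
      (∀ θ, θ ∉ Icc (-a) a → f θ = 0) ∧
      ∫ θ, (deriv f θ) ^ 2 < c * ∫ θ, f θ ^ 2 * V θ := by
  obtain ⟨C, hC0, hcut⟩ := hCutoff_exists
  have hΦc : ∀ x, -b < x → x < b → ContinuousAt Φ x := fun x h1 h2 => (hΦ x h1 h2).continuousAt
  have hJpos : 0 < ∫ x in (-(b/2))..(b/2), V x * Φ x ^ 2 := by
    refine intervalIntegral.integral_pos (by linarith) ?_ ?_ ?_
    · refine ContinuousOn.mul (hV.mono ?_) (ContinuousOn.pow ?_ 2)
      · intro x hx; constructor <;> linarith [hx.1, hx.2]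
      · intro x hx
        exact (hΦc x (by linarith [hx.1]) (by linarith [hx.2])).continuousWithinAt
    · intro x _
      have := hV0 x
      positivity
    · refine ⟨0, ⟨by linarith, by linarith⟩, ?_⟩
      positivity
  set J := ∫ x in (-(b/2))..(b/2), V x * Φ x ^ 2
  obtain ⟨δ, hδ0, hδb, hδ⟩ : ∃ δ : ℝ, 0 < δ ∧ δ < b / 4 ∧
      (2 * K * 2 ^ (2 * α) * C ^ 2) * δ ^ (2 * α - 1) < (c - c0) * J := by
    have hcont : ContinuousAt (fun δ : ℝ => (2 * K * 2 ^ (2 * α) * C ^ 2) * δ ^ (2 * α - 1)) 0 :=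
      (Real.continuousAt_rpow_const 0 _ (Or.inr (by linarith))).const_mul _
    have h0 : (2 * K * 2 ^ (2 * α) * C ^ 2) * (0:ℝ) ^ (2 * α - 1) < (c - c0) * J := by
      rw [Real.zero_rpow (by linarith), mul_zero]
      exact mul_pos (by linarith) hJpos
    have h1 := hcont.eventually (gt_mem_nhds h0)
    have h2 : ∀ᶠ δ : ℝ in nhds 0, δ < b / 4 := gt_mem_nhds (by linarith)
    have h3 : ∀ᶠ δ : ℝ in nhdsWithin 0 (Ioi 0), 0 < δ := eventually_mem_nhdsWithin
    obtain ⟨δ, h, h'⟩ := ((h1.and h2).filter_mono nhdsWithin_le_nhds |>.and h3).exists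
    exact ⟨δ, h', h.2, h.1⟩
  obtain ⟨χ, hχs, hχz, hχ1, hχd⟩ := hcut b δ hδ0
  set a := b - δ with haδ
  have ha : 0 < a := by linarith
  have hsub : Icc (-a) a ⊆ Ioo (-b) b := fun x hx => ⟨by linarith [hx.1], by linarith [hx.2]⟩
  have hχz' : ∀ x, x ∉ Icc (-a) a → χ x = 0 :=
    fun x hx => hχz x (fun h => hx (Ioo_subset_Icc_self h))
  have cΦ : ContinuousOn Φ (Icc (-a) a) := fun x hx =>
    (hΦc x (hsub hx).1 (hsub hx).2).continuousWithinAt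
  have cΦ1 : ContinuousOn Φ1 (Icc (-a) a) := fun x hx =>
    (hΦ1 x (hsub hx).1 (hsub hx).2).continuousAt.continuousWithinAt
  have cV : ContinuousOn V (Icc (-a) a) := hV.mono hsub
  have cχ : ContinuousOn χ (Icc (-a) a) := hχs.continuous.continuousOn
  have cχ' : ContinuousOn (deriv χ) (Icc (-a) a) := (hχs.continuous_deriv (by simp)).continuousOn
  have hII : ∀ {h : ℝ → ℝ}, ContinuousOn h (Icc (-a) a) → IntervalIntegrable h volume (-a) a := by
    intro h hh
    exact ContinuousOn.intervalIntegrable (by rwa [uIcc_of_le (by linarith)])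
  suffices hkey : ∫ x in (-a)..a,
      ((Φ1 x * χ x + Φ x * deriv χ x) ^ 2 - c * ((Φ x * χ x) ^ 2 * V x)) < 0 by
    obtain ⟨f, hfs, hfz, hflt⟩ := hApprox (c := c) (V := V) ha
      (fun x hx => hΦ x (hsub hx).1 (hsub hx).2) cΦ1 hχs hχz' cV hkey
    exact ⟨f, a, hfs, ha, by linarith, hfz, hflt⟩
  -- the energy identity
  have hG0 : ∫ x in (-a)..a, ((-c0 * V x * Φ x * Φ x + Φ1 x * Φ1 x) * χ x ^ 2
      + Φ1 x * Φ x * (2 * χ x * deriv χ x)) = 0 := by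
    rw [intervalIntegral.integral_eq_sub_of_hasDerivAt (f := fun x => Φ1 x * Φ x * χ x ^ 2)]
    · rw [hχz a (by simp), hχz (-a) (by simp)]; simp
    · intro x hx
      rw [uIcc_of_le (by linarith)] at hx
      have h1 := hΦ1 x (hsub hx).1 (hsub hx).2
      have h2 := hΦ x (hsub hx).1 (hsub hx).2
      have h3 := ((hχs.differentiable (by simp)) x).hasDerivAt.pow 2
      convert! (h1.mul h2).mul h3 using 1
      simp
    · apply hII
      fun_prop
  have hid : ∀ x, (Φ1 x * χ x + Φ x * deriv χ x) ^ 2 - c * ((Φ x * χ x) ^ 2 * V x) =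
      ((-c0 * V x * Φ x * Φ x + Φ1 x * Φ1 x) * χ x ^ 2
      + Φ1 x * Φ x * (2 * χ x * deriv χ x)) + ((Φ x * deriv χ x) ^ 2
        - (c - c0) * (V x * Φ x ^ 2 * χ x ^ 2)) := by
    intro x; ring
  simp_rw [hid]
  rw [intervalIntegral.integral_add (hII (by fun_prop)) (hII (by fun_prop)), hG0, zero_add,
    intervalIntegral.integral_sub (hII (by fun_prop)) (hII (by fun_prop)),
    intervalIntegral.integral_const_mul]
  have hJle : J ≤ ∫ x in (-a)..a, V x * Φ x ^ 2 * χ x ^ 2 := by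
    have : J = ∫ x in (-(b/2))..(b/2), V x * Φ x ^ 2 * χ x ^ 2 := by
      refine intervalIntegral.integral_congr fun x hx => ?_
      rw [uIcc_of_le (by linarith)] at hx
      rw [(hχ1 x ⟨by linarith [hx.1], by linarith [hx.2]⟩).1]; ring
    rw [this]
    refine intervalIntegral.integral_mono_interval (by linarith) (by linarith) (by linarith) ?_
      (hII (by fun_prop))
    refine Filter.Eventually.of_forall fun x => ?_
    have := hV0 x
    simp only [Pi.zero_apply]
    positivity
  have hE : ∫ x in (-a)..a, (Φ x * deriv χ x) ^ 2 ≤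
      (2 * K * 2 ^ (2 * α) * C ^ 2) * δ ^ (2 * α - 1) := by
    have cE : ContinuousOn (fun x => (Φ x * deriv χ x) ^ 2) (Icc (-a) a) := by fun_prop
    have hsubI : ∀ {u v : ℝ}, -a ≤ u → u ≤ v → v ≤ a →
        IntervalIntegrable (fun x => (Φ x * deriv χ x) ^ 2) volume u v := by
      intro u v h1 h2 h3
      refine ContinuousOn.intervalIntegrable (cE.mono ?_)
      rw [uIcc_of_le h2]; exact Icc_subset_Icc h1 h3
    rw [← intervalIntegral.integral_add_adjacent_intervals (b := -(b - 2 * δ))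
      (hsubI le_rfl (by linarith) (by linarith)) (hsubI (by linarith) (by linarith) le_rfl),
      ← intervalIntegral.integral_add_adjacent_intervals (a := -(b - 2 * δ)) (b := b - 2 * δ)
      (hsubI (by linarith) (by linarith) (by linarith)) (hsubI (by linarith) (by linarith) le_rfl)]
    have hpt : ∀ x ∈ Icc (-a) a, b - 2 * δ ≤ |x| →
        ‖(Φ x * deriv χ x) ^ 2‖ ≤ K * (2 * δ) ^ (2 * α) * (C / δ) ^ 2 := by
      intro x hx hx2
      rw [Real.norm_of_nonneg (sq_nonneg _), mul_pow, ← sq_abs (deriv χ x)]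
      have h1 := hbd x (hsub hx).1 (hsub hx).2
      have habs : |x| ≤ a := abs_le.2 hx
      have h2 : (b - |x|) ^ (2 * α) ≤ (2 * δ) ^ (2 * α) :=
        Real.rpow_le_rpow (by linarith) (by linarith) (by linarith)
      have h3 := hχd x
      have h4 : Φ x ^ 2 ≤ K * (2 * δ) ^ (2 * α) := h1.trans (mul_le_mul_of_nonneg_left h2 hK)
      gcongr
    have i1 := intervalIntegral.norm_integral_le_of_norm_le_const (a := -a) (b := -(b - 2 * δ))
      (f := fun x => (Φ x * deriv χ x) ^ 2) (C := K * (2 * δ) ^ (2 * α) * (C / δ) ^ 2) (by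
        intro x hx
        rw [uIoc_of_le (by linarith)] at hx
        have hxneg : x ≤ 0 := by linarith [hx.2]
        exact hpt x ⟨hx.1.le, by linarith [hx.2]⟩ (by rw [abs_of_nonpos hxneg]; linarith [hx.2]))
    have i2 := intervalIntegral.norm_integral_le_of_norm_le_const (a := -(b - 2 * δ)) (b := b - 2 * δ)
      (f := fun x => (Φ x * deriv χ x) ^ 2) (C := 0) (by
        intro x hx
        rw [uIoc_of_le (by linarith)] at hx
        rw [(hχ1 x ⟨hx.1.le, hx.2⟩).2]; simp)
    have i3 := intervalIntegral.norm_integral_le_of_norm_le_const (a := b - 2 * δ) (b := a)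
      (f := fun x => (Φ x * deriv χ x) ^ 2) (C := K * (2 * δ) ^ (2 * α) * (C / δ) ^ 2) (by
        intro x hx
        rw [uIoc_of_le (by linarith)] at hx
        exact hpt x ⟨by linarith [hx.1], hx.2⟩ (hx.1.le.trans (le_abs_self x)))
    have a1 : |-(b - 2 * δ) - -a| = δ := by
      rw [show -(b - 2 * δ) - -a = δ by rw [haδ]; ring, abs_of_pos hδ0]
    have a3 : |a - (b - 2 * δ)| = δ := by
      rw [show a - (b - 2 * δ) = δ by rw [haδ]; ring, abs_of_pos hδ0]
    rw [a1] at i1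
    rw [a3] at i3
    rw [zero_mul] at i2
    have e : K * (2 * δ) ^ (2 * α) * (C / δ) ^ 2 * δ * 2 =
        (2 * K * 2 ^ (2 * α) * C ^ 2) * δ ^ (2 * α - 1) := by
      rw [Real.mul_rpow (by norm_num) hδ0.le, Real.rpow_sub_one hδ0.ne']
      field_simp
    have j1 := (le_abs_self _).trans i1
    have j2 := (le_abs_self _).trans i2
    have j3 := (le_abs_self _).trans i3
    linarith
  have := mul_le_mul_of_nonneg_left hJle (by linarith : 0 ≤ c - c0)
  linarith


lemma hGlue {a a' b b' : ℝ → ℝ} {x0 x : ℝ} (ha : x ≤ x0 → HasDerivAt a (a' x) x)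
    (hb : x0 ≤ x → HasDerivAt b (b' x) x) (h0 : a x0 = b x0) (h1 : a' x0 = b' x0) :
    HasDerivAt (fun y => if y ≤ x0 then a y else b y) (if x ≤ x0 then a' x else b' x) x := by
  rcases lt_trichotomy x x0 with h | h | h
  · rw [if_pos h.le]
    refine (ha h.le).congr_of_eventuallyEq ?_
    filter_upwards [Iio_mem_nhds h] with y hy
    rw [if_pos (le_of_lt hy)]
  · subst h
    rw [if_pos le_rfl]
    have h2 : HasDerivWithinAt (fun y => if y ≤ x then a y else b y) (a' x) (Iic x) x := by
      refine (ha le_rfl).hasDerivWithinAt.congr (fun y hy => ?_) ?_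
      · rw [if_pos (mem_Iic.1 hy)]
      · rw [if_pos le_rfl]
    have h3 : HasDerivWithinAt (fun y => if y ≤ x then a y else b y) (a' x) (Ici x) x := by
      rw [h1]
      refine (hb le_rfl).hasDerivWithinAt.congr (fun y hy => ?_) ?_
      · rcases eq_or_lt_of_le (show x ≤ y from hy) with h | h
        · rw [← h, if_pos le_rfl, h0]
        · rw [if_neg (not_le.2 h)]
      · rw [if_pos le_rfl, h0]
    have := h2.union h3
    rwa [Iic_union_Ici, hasDerivWithinAt_univ] at this
  · rw [if_neg (not_le.2 h)]
    refine (hb h.le).congr_of_eventuallyEq ?_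
    filter_upwards [Ioi_mem_nhds h] with y hy
    rw [if_neg (not_le.2 hy)]

lemma hAng2 {m c c0 : ℝ} (hm : 0 < m) (hm2 : m < π / 2) (hc0 : 0 < c0) (hc4 : c0 < 1 / 4)
    (hc : c0 < c)
    (heq : √c0 * Real.tan (√c0 * m) = 2 * (Real.Gamma ((3 + √(1 - 4 * c0)) / 4) /
         Real.Gamma ((1 + √(1 - 4 * c0)) / 4)) ^ 2) :
    ∃ (f : ℝ → ℝ) (a : ℝ), ContDiff ℝ (⊤ : ℕ∞) f ∧ 0 < a ∧ a < m + π / 2 ∧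
      (∀ θ, θ ∉ Icc (-a) a → f θ = 0) ∧
      ∫ θ, (deriv f θ) ^ 2 < c * ∫ θ, f θ ^ 2 * hV m θ := by
  have hpi := Real.pi_gt_three
  set α : ℝ := (1 + √(1 - 4 * c0)) / 2 with hα
  set ω := √c0 with hω
  have hs0 : 0 < √(1 - 4 * c0) := Real.sqrt_pos.2 (by linarith)
  have hs2 : √(1 - 4 * c0) ^ 2 = 1 - 4 * c0 := Real.sq_sqrt (by linarith)
  have hω2 : ω ^ 2 = c0 := Real.sq_sqrt hc0.le
  have hω0 : 0 < ω := Real.sqrt_pos.2 hc0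
  have hω1 : ω < 1 / 2 := by nlinarith
  have hα1 : 1 / 2 < α := by rw [hα]; linarith
  have hα0 : 0 < α := by linarith
  have hαc : α * (1 - α) = c0 := by rw [hα]; nlinarith
  have hg : 0 < hG α 0 := hG_zero_pos hα0
  have hcos : 0 < Real.cos (ω * m) := by
    apply Real.cos_pos_of_mem_Ioo
    constructor <;> nlinarith
  have hκ : α * hG (α + 1) 0 / hG α 0 * Real.cos (ω * m) = ω * Real.sin (ω * m) := by
    have h1 := hG_ratio hα0
    rw [h1, mul_div_assoc, div_self hg.ne', mul_one]
    have e1 : (α + 1) / 2 = (3 + √(1 - 4 * c0)) / 4 := by rw [hα]; ring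
    have e2 : α / 2 = (1 + √(1 - 4 * c0)) / 4 := by rw [hα]; ring
    rw [e1, e2, ← heq, Real.tan_eq_sin_div_cos]
    field_simp
  set C := Real.cos (ω * m) / hG α 0 with hC
  have hC0 : 0 < C := div_pos hcos hg
  have p0 : hpsi α 0 = hG α 0 := by simp [hpsi]
  have p1 : hpsi1 α 0 = - (α * hG (α + 1) 0) := by simp [hpsi1]
  have mC : C * hpsi α 0 = Real.cos (ω * m) := by rw [p0, hC]; field_simp
  have mC1 : C * hpsi1 α 0 = - (ω * Real.sin (ω * m)) := by
    rw [p1, ← hκ, hC]; field_simp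
  -- the three pieces
  let Φ : ℝ → ℝ := fun y => if y ≤ -m then C * hpsi α (-y - m) else
    (if y ≤ m then Real.cos (ω * y) else C * hpsi α (y - m))
  let Φ1 : ℝ → ℝ := fun y => if y ≤ -m then -(C * hpsi1 α (-y - m)) else
    (if y ≤ m then -(ω * Real.sin (ω * y)) else C * hpsi1 α (y - m))
  have dcos : ∀ x, HasDerivAt (fun y => Real.cos (ω * y)) (-(ω * Real.sin (ω * x))) x := by
    intro x
    have := ((hasDerivAt_id x).const_mul ω).cos
    convert! this using 1
    simp; ring
  have dsin : ∀ x, HasDerivAt (fun y => -(ω * Real.sin (ω * y))) (-(c0 * Real.cos (ω * x))) x := by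
    intro x
    have := ((((hasDerivAt_id x).const_mul ω).sin).const_mul ω).neg
    convert! this using 1
    simp; rw [← hω2]; ring
  have hΦd : ∀ x, -(m + π / 2) < x → x < m + π / 2 → HasDerivAt Φ (Φ1 x) x := by
    intro x h1 h2
    refine hGlue (a := fun y => C * hpsi α (-y - m)) (a' := fun y => -(C * hpsi1 α (-y - m)))
      (b := fun y => if y ≤ m then Real.cos (ω * y) else C * hpsi α (y - m))
      (b' := fun y => if y ≤ m then -(ω * Real.sin (ω * y)) else C * hpsi1 α (y - m)) ?_ ?_ ?_ ?_
    · intro hx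
      have h3 := hpsi_deriv (p := α) (s := -x - m) hα0 (by linarith) (by linarith)
      have h4 : HasDerivAt (fun y : ℝ => -y - m) (-1) x := ((hasDerivAt_id x).neg).sub_const m
      have := (HasDerivAt.comp x h3 h4).const_mul C
      convert! this using 1
      ring
    · intro hx
      refine hGlue (a := fun y => Real.cos (ω * y)) (a' := fun y => -(ω * Real.sin (ω * y)))
        (b := fun y => C * hpsi α (y - m)) (b' := fun y => C * hpsi1 α (y - m)) ?_ ?_ ?_ ?_
      · intro _; exact dcos x
      · intro hx
        have h3 := hpsi_deriv (p := α) (s := x - m) hα0 (by linarith) (by linarith)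
        have h4 : HasDerivAt (fun y : ℝ => y - m) 1 x := (hasDerivAt_id x).sub_const m
        have := (HasDerivAt.comp x h3 h4).const_mul C
        convert! this using 1
        ring
      · simp only [sub_self, mC]
      · simp only [sub_self, mC1]
    · simp only [neg_neg, sub_self, mC]
      rw [if_pos (by linarith)]; simp
    · simp only [neg_neg, sub_self, mC1]
      rw [if_pos (by linarith)]; simp
  have hΦ1d : ∀ x, -(m + π / 2) < x → x < m + π / 2 →
      HasDerivAt Φ1 (-c0 * hV m x * Φ x) x := by
    intro x h1 h2
    have key := hGlue (x := x) (x0 := -m) (a := fun y => -(C * hpsi1 α (-y - m)))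
      (a' := fun y => C * (-(α * (1 - α)) * (1 / Real.cos (-y - m) ^ 2) * hpsi α (-y - m)))
      (b := fun y => if y ≤ m then -(ω * Real.sin (ω * y)) else C * hpsi1 α (y - m))
      (b' := fun y => if y ≤ m then -(c0 * Real.cos (ω * y)) else
        C * (-(α * (1 - α)) * (1 / Real.cos (y - m) ^ 2) * hpsi α (y - m))) ?_ ?_ ?_ ?_
    · convert! key using 1
      simp only [Φ, hV]
      split_ifs with k1 k2
      · rw [abs_of_nonpos (by linarith), max_eq_left (by linarith), hαc]; ring
      · rw [max_eq_right (by linarith [abs_le.2 ⟨(not_le.1 k1).le, k2⟩])]; simp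
      · rw [abs_of_nonneg (by linarith [not_le.1 k2]), max_eq_left (by linarith [not_le.1 k2]), hαc]
        ring
    · intro hx
      have h3 := hpsi1_deriv (p := α) (s := -x - m) hα0 (by linarith) (by linarith)
      have h4 : HasDerivAt (fun y : ℝ => -y - m) (-1) x := ((hasDerivAt_id x).neg).sub_const m
      have := ((HasDerivAt.comp x h3 h4).const_mul C).neg
      convert! this using 1
      ring
    · intro hx
      refine hGlue (a := fun y => -(ω * Real.sin (ω * y))) (a' := fun y => -(c0 * Real.cos (ω * y)))
        (b := fun y => C * hpsi1 α (y - m))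
        (b' := fun y => C * (-(α * (1 - α)) * (1 / Real.cos (y - m) ^ 2) * hpsi α (y - m)))
        ?_ ?_ ?_ ?_
      · intro _; exact dsin x
      · intro hx
        have h3 := hpsi1_deriv (p := α) (s := x - m) hα0 (by linarith) (by linarith)
        have h4 : HasDerivAt (fun y : ℝ => y - m) 1 x := (hasDerivAt_id x).sub_const m
        have := (HasDerivAt.comp x h3 h4).const_mul C
        convert! this using 1
        ring
      · simp only [sub_self, mC1]
      · simp only [sub_self, hαc, ← mC]; simp; ring
    · simp only [neg_neg, sub_self, mC1]
      rw [if_pos (by linarith)]; simp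
    · simp only [neg_neg, sub_self, hαc]
      rw [if_pos (by linarith)]; simp [← mC]; ring
  have hψb : ∀ s, 0 ≤ s → s < π / 2 → (C * hpsi α s) ^ 2 ≤ (π / 2 - s) ^ (2 * α) := by
    intro s h1 h2
    have hsin : 0 ≤ Real.sin s := Real.sin_nonneg_of_nonneg_of_le_pi h1 (by linarith)
    have hco : 0 < Real.cos s := Real.cos_pos_of_mem_Ioo ⟨by linarith, h2⟩
    have k1 := hG_anti hα0 hsin
    have k2 := hG_nonneg (p := α) hsin
    have k3 : Real.cos s ≤ π / 2 - s := by
      rw [← Real.sin_pi_div_two_sub]; exact Real.sin_le (by linarith)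
    have k4 : 0 ≤ C * hpsi α s := by
      unfold hpsi; positivity
    have k5 : C * hpsi α s ≤ (π / 2 - s) ^ α := by
      have : C * hpsi α s ≤ C * (Real.cos s ^ α * hG α 0) := by unfold hpsi; gcongr
      refine this.trans ?_
      have e : C * (Real.cos s ^ α * hG α 0) = Real.cos (ω * m) * Real.cos s ^ α := by
        rw [hC]; field_simp
      rw [e]
      calc Real.cos (ω * m) * Real.cos s ^ α ≤ 1 * Real.cos s ^ α := by
            gcongr; exact Real.cos_le_one _
        _ = Real.cos s ^ α := one_mul _
        _ ≤ _ := Real.rpow_le_rpow hco.le k3 hα0.le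
    rw [show 2 * α = α + α by ring, Real.rpow_add (by linarith), sq]
    exact mul_le_mul k5 k5 k4 (k4.trans k5)
  have hbd : ∀ x, -(m + π / 2) < x → x < m + π / 2 →
      Φ x ^ 2 ≤ 1 * ((m + π / 2) - |x|) ^ (2 * α) := by
    intro x h1 h2
    rw [one_mul]
    simp only [Φ]
    split_ifs with k1 k2
    · rw [abs_of_nonpos (by linarith)]
      convert! hψb (-x - m) (by linarith) (by linarith) using 2
      ring
    · have : |x| ≤ m := abs_le.2 ⟨(not_le.1 k1).le, k2⟩
      have h3 : (1:ℝ) ≤ ((m + π / 2) - |x|) ^ (2 * α) :=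
        Real.one_le_rpow (by linarith) (by linarith)
      have := Real.cos_sq_le_one (ω * x)
      linarith
    · have := not_le.1 k2
      rw [abs_of_nonneg (by linarith)]
      convert! hψb (x - m) (by linarith) (by linarith) using 2
      ring
  have hΦ0 : Φ 0 = 1 := by
    simp only [Φ]
    rw [if_neg (by linarith), if_pos hm.le]; simp
  refine hAng2abs (b := m + π / 2) (c0 := c0) (α := α) (K := 1) (by linarith) hc hα1 zero_le_one
    hΦd hΦ1d hV_cont ?_ ?_ ?_ hbd
  · intro x; unfold hV; positivity
  · unfold hV; rw [abs_zero, max_eq_right (by linarith)]; simp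
  · rw [hΦ0]; exact one_ne_zero

lemma hAng {c cβ β βcr : ℝ} (hβ : π < β) (hβ2 : β < 2 * π)
    (h : (β ≤ βcr ∧ cβ = 1 / 4) ∨ (βcr < β ∧ cβ ∈ Set.Ioc (0 : ℝ) (1 / 4) ∧
      √cβ * Real.tan (√cβ * ((β - π) / 2)) = 2 * (Real.Gamma ((3 + √(1 - 4 * cβ)) / 4) /
         Real.Gamma ((1 + √(1 - 4 * cβ)) / 4)) ^ 2)) (hc : cβ < c) :
    0 < c ∧ ∃ (f : ℝ → ℝ) (a : ℝ), ContDiff ℝ (⊤ : ℕ∞) f ∧ 0 < a ∧ a < β / 2 ∧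
      (∀ θ, θ ∉ Icc (-a) a → f θ = 0) ∧
      ∫ θ, (deriv f θ) ^ 2 < c * ∫ θ, f θ ^ 2 * hV ((β - π) / 2) θ := by
  have e : β / 2 = (β - π) / 2 + π / 2 := by ring
  rw [e]
  rcases lt_or_ge (1 / 4) c with h4 | h4
  · exact ⟨by linarith, hAng1 (by linarith) h4⟩
  · rcases h with ⟨_, h⟩ | ⟨_, h1, h2⟩
    · linarith
    · exact ⟨by linarith [h1.1], hAng2 (by linarith) (by linarith) h1.1 (by linarith) hc h2⟩


/-- Polar coordinates in the complex plane. -/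
noncomputable def hE (r θ : ℝ) : ℂ := (r : ℂ) * (Complex.cos θ + Complex.sin θ * Complex.I)

lemma hE_re (r θ : ℝ) : (hE r θ).re = r * Real.cos θ := by
  simp [hE, Complex.cos_ofReal_re, Complex.sin_ofReal_im]

lemma hE_im (r θ : ℝ) : (hE r θ).im = r * Real.sin θ := by
  simp [hE, Complex.cos_ofReal_im, Complex.sin_ofReal_re]

lemma hE_arg {r θ : ℝ} (hr : 0 < r) (hθ : θ ∈ Ioc (-π) π) : (hE r θ).arg = θ :=
  Complex.arg_mul_cos_add_sin_mul_I hr hθ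

lemma hE_norm {r : ℝ} (θ : ℝ) (hr : 0 ≤ r) : ‖hE r θ‖ = r := by
  have := Complex.norm_polarCoord_symm (r, θ)
  rw [Complex.polarCoord_symm_apply] at this
  simp only [abs_of_nonneg hr] at this
  rw [← this]; simp [hE]

lemma hE_self (z : ℂ) : hE ‖z‖ z.arg = z := Complex.norm_mul_cos_add_sin_mul_I z

lemma hE_cont : Continuous (fun p : ℝ × ℝ => hE p.1 p.2) := by
  unfold hE; fun_prop

/-- The trial function in polar coordinates. -/
noncomputable def hU (f g : ℝ → ℝ) (z : ℂ) : ℝ := f z.arg * g ‖z‖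

lemma hU_log {f g : ℝ → ℝ} {z : ℂ} (hz : z ≠ 0) :
    hU f g z = f (Complex.log z).im * g (Real.exp (Complex.log z).re) := by
  rw [hU, Complex.log_im, Complex.log_re, Real.exp_log (norm_pos_iff.2 hz)]

lemma hU_log_ev {f g : ℝ → ℝ} {z : ℂ} (hz : z ≠ 0) :
    hU f g =ᶠ[nhds z] fun z => f (Complex.log z).im * g (Real.exp (Complex.log z).re) := by
  filter_upwards [isOpen_ne.mem_nhds hz] with w hw using hU_log hw

lemma hU_contDiffAt {f g : ℝ → ℝ} (hf : ContDiff ℝ (⊤ : ℕ∞) f) (hg : ContDiff ℝ (⊤ : ℕ∞) g)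
    {z : ℂ} (hz : z ∈ Complex.slitPlane) : ContDiffAt ℝ (⊤ : ℕ∞) (hU f g) z := by
  refine ContDiffAt.congr_of_eventuallyEq ?_ (hU_log_ev (Complex.slitPlane_ne_zero hz))
  have h1 : ContDiffAt ℝ (⊤ : ℕ∞) Complex.log z :=
    (Complex.contDiffAt_log hz (n := ((⊤ : ℕ∞) : WithTop ℕ∞))).restrict_scalars ℝ
  have h2 : ContDiffAt ℝ (⊤ : ℕ∞) (fun w => (Complex.log w).im) z :=
    Complex.imCLM.contDiff.contDiffAt.comp z h1
  have h3 : ContDiffAt ℝ (⊤ : ℕ∞) (fun w => (Complex.log w).re) z :=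
    Complex.reCLM.contDiff.contDiffAt.comp z h1
  exact (hf.contDiffAt.comp z h2).mul (hg.contDiffAt.comp z h3.exp)

lemma hU_fderiv {f g : ℝ → ℝ} (hf : ContDiff ℝ (⊤ : ℕ∞) f) (hg : ContDiff ℝ (⊤ : ℕ∞) g)
    {z : ℂ} (hz : z ∈ Complex.slitPlane) :
    ‖fderiv ℝ (hU f g) z‖ ^ 2 ≤ deriv f z.arg ^ 2 * (g ‖z‖ ^ 2 / ‖z‖ ^ 2)
      + f z.arg ^ 2 * deriv g ‖z‖ ^ 2 := by
  have hz0 := Complex.slitPlane_ne_zero hz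
  have hn : 0 < ‖z‖ := norm_pos_iff.2 hz0
  have h1 : HasFDerivAt Complex.log (z⁻¹ • (1 : ℂ →L[ℝ] ℂ)) z :=
    (Complex.hasStrictFDerivAt_log_real hz).hasFDerivAt
  have h2 : HasFDerivAt (fun w => (Complex.log w).im) (Complex.imCLM.comp (z⁻¹ • (1 : ℂ →L[ℝ] ℂ))) z :=
    Complex.imCLM.hasFDerivAt.comp z h1
  have h3 : HasFDerivAt (fun w => (Complex.log w).re) (Complex.reCLM.comp (z⁻¹ • (1 : ℂ →L[ℝ] ℂ))) z :=
    Complex.reCLM.hasFDerivAt.comp z h1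
  have hfd := ((hf.differentiable (by simp)) (Complex.log z).im).hasDerivAt
  have hgd := ((hg.differentiable (by simp)) (Real.exp (Complex.log z).re)).hasDerivAt
  have h4 := (hfd.comp_hasFDerivAt z h2).mul (hgd.comp_hasFDerivAt z h3.exp)
  have h5 := h4.congr_of_eventuallyEq (hU_log_ev hz0)
  rw [h5.fderiv]
  have e1 : (Complex.log z).im = z.arg := Complex.log_im z
  have e2 : Real.exp (Complex.log z).re = ‖z‖ := by rw [Complex.log_re, Real.exp_log hn]
  simp only [Function.comp, e1, e2]
  set Q := deriv f z.arg ^ 2 * (g ‖z‖ ^ 2 / ‖z‖ ^ 2) + f z.arg ^ 2 * deriv g ‖z‖ ^ 2 with hQ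
  have hQ0 : 0 ≤ Q := by positivity
  rw [← Real.sq_sqrt hQ0]
  gcongr
  refine ContinuousLinearMap.opNorm_le_bound _ (Real.sqrt_nonneg _) fun w => ?_
  rw [Real.norm_eq_abs]
  refine abs_le_of_sq_le_sq ?_ (by positivity)
  rw [mul_pow, Real.sq_sqrt hQ0]
  have hw : ‖w‖ ^ 2 = ‖z‖ ^ 2 * ((z⁻¹ * w).re ^ 2 + (z⁻¹ * w).im ^ 2) := by
    have : w = z * (z⁻¹ * w) := by field_simp
    have h6 : ‖z⁻¹ * w‖ ^ 2 = (z⁻¹ * w).re ^ 2 + (z⁻¹ * w).im ^ 2 := by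
      rw [Complex.sq_norm, Complex.normSq_apply]; ring
    rw [← h6, ← mul_pow, ← norm_mul, ← this]
  rw [hw]
  have hQ2 : Q * (‖z‖ ^ 2 * ((z⁻¹ * w).re ^ 2 + (z⁻¹ * w).im ^ 2)) =
      ((deriv f z.arg * g ‖z‖) ^ 2 + (f z.arg * deriv g ‖z‖ * ‖z‖) ^ 2) *
        ((z⁻¹ * w).re ^ 2 + (z⁻¹ * w).im ^ 2) := by
    rw [hQ]; field_simp
  rw [hQ2]
  simp only [ContinuousLinearMap.add_apply, ContinuousLinearMap.smul_apply,
    ContinuousLinearMap.comp_apply, ContinuousLinearMap.one_apply, smul_eq_mul,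
    Complex.imCLM_apply, Complex.reCLM_apply]
  set X := (z⁻¹ * w).re
  set Y := (z⁻¹ * w).im
  nlinarith [sq_nonneg ((deriv f z.arg * g ‖z‖) * X - (f z.arg * deriv g ‖z‖ * ‖z‖) * Y)]

/-- The compact polar rectangle. -/
def hK (r1 r2 a : ℝ) : Set ℂ := (fun p : ℝ × ℝ => hE p.1 p.2) '' (Icc r1 r2 ×ˢ Icc (-a) a)

lemma hK_compact (r1 r2 a : ℝ) : IsCompact (hK r1 r2 a) :=
  (isCompact_Icc.prod isCompact_Icc).image hE_cont

lemma hU_zero {f g : ℝ → ℝ} {r1 r2 a : ℝ} (hf : ∀ θ, θ ∉ Icc (-a) a → f θ = 0)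
    (hg : ∀ r, r ∉ Icc r1 r2 → g r = 0) {z : ℂ} (hz : z ∉ hK r1 r2 a) : hU f g z = 0 := by
  by_contra h
  have h1 : z.arg ∈ Icc (-a) a := by
    by_contra h'; exact h (by rw [hU, hf _ h', zero_mul])
  have h2 : ‖z‖ ∈ Icc r1 r2 := by
    by_contra h'; exact h (by rw [hU, hg _ h', mul_zero])
  exact hz ⟨(‖z‖, z.arg), ⟨h2, h1⟩, hE_self z⟩

lemma hK_slit {r1 r2 a : ℝ} (hr : 0 < r1) (ha : a < π) : hK r1 r2 a ⊆ Complex.slitPlane := by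
  rintro z ⟨⟨r, θ⟩, ⟨h1, h2⟩, rfl⟩
  simp only at h1 h2 ⊢
  have hr0 : 0 < r := lt_of_lt_of_le hr h1.1
  rw [Complex.mem_slitPlane_iff_arg, hE_arg hr0 ⟨by linarith [h2.1], by linarith [h2.2]⟩]
  refine ⟨by linarith [h2.2], ?_⟩
  intro h0
  have := hE_norm θ hr0.le
  rw [h0, norm_zero] at this
  linarith

lemma hU_contDiff {f g : ℝ → ℝ} {r1 r2 a : ℝ} (hr : 0 < r1) (ha : a < π)
    (hf : ContDiff ℝ (⊤ : ℕ∞) f) (hg : ContDiff ℝ (⊤ : ℕ∞) g)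
    (hfz : ∀ θ, θ ∉ Icc (-a) a → f θ = 0) (hgz : ∀ r, r ∉ Icc r1 r2 → g r = 0) :
    ContDiff ℝ (⊤ : ℕ∞) (hU f g) := by
  rw [contDiff_iff_contDiffAt]
  intro z
  by_cases hz : z ∈ Complex.slitPlane
  · exact hU_contDiffAt hf hg hz
  · have hz' : z ∉ hK r1 r2 a := fun h => hz (hK_slit hr ha h)
    refine (contDiffAt_const (c := (0:ℝ))).congr_of_eventuallyEq ?_
    filter_upwards [(hK_compact r1 r2 a).isClosed.isOpen_compl.mem_nhds hz'] with w hw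
      using hU_zero hfz hgz hw

lemma hU_tsupport {f g : ℝ → ℝ} {r1 r2 a : ℝ}
    (hfz : ∀ θ, θ ∉ Icc (-a) a → f θ = 0) (hgz : ∀ r, r ∉ Icc r1 r2 → g r = 0) :
    tsupport (hU f g) ⊆ hK r1 r2 a := by
  refine closure_minimal (fun z hz => ?_) (hK_compact r1 r2 a).isClosed
  by_contra h
  exact hz (hU_zero hfz hgz h)

lemma hPolar (h : ℂ → ℝ) :
    ∫ p in (Ioi (0:ℝ) ×ˢ Ioo (-π) π), p.1 * h (hE p.1 p.2) = ∫ z, h z := by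
  rw [← Complex.integral_comp_polarCoord_symm]
  simp only [polarCoord_target, Complex.polarCoord_symm_apply, hE, smul_eq_mul,
    Complex.ofReal_cos, Complex.ofReal_sin]

lemma hPolarProd {h : ℂ → ℝ} {A B : ℝ → ℝ} (hB : ∀ θ, θ ∉ Ioo (-π) π → B θ = 0)
    (hh : ∀ r θ, 0 < r → θ ∈ Ioo (-π) π → r * h (hE r θ) = A r * B θ) :
    ∫ z, h z = (∫ r in Ioi (0:ℝ), A r) * ∫ θ, B θ := by
  rw [← hPolar, ← setIntegral_eq_integral_of_forall_compl_eq_zero hB, ← setIntegral_prod_mul,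
    ← Measure.volume_eq_prod]
  refine setIntegral_congr_fun (measurableSet_Ioi.prod measurableSet_Ioo) ?_
  rintro ⟨r, θ⟩ ⟨h1, h2⟩
  exact hh r θ h1 h2

lemma hPolarLe {h : ℂ → ℝ} {A B A' B' : ℝ → ℝ} (hB : ∀ θ, θ ∉ Ioo (-π) π → B θ = 0)
    (hB' : ∀ θ, θ ∉ Ioo (-π) π → B' θ = 0) (h0 : ∀ z, 0 ≤ h z)
    (iA : Integrable A) (iB : Integrable B) (iA' : Integrable A') (iB' : Integrable B')
    (hh : ∀ r θ, 0 < r → θ ∈ Ioo (-π) π → r * h (hE r θ) ≤ A r * B θ + A' r * B' θ) :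
    ∫ z, h z ≤ (∫ r in Ioi (0:ℝ), A r) * (∫ θ, B θ) + (∫ r in Ioi (0:ℝ), A' r) * ∫ θ, B' θ := by
  have i1 : IntegrableOn (fun p : ℝ × ℝ => A p.1 * B p.2) (Ioi (0:ℝ) ×ˢ Ioo (-π) π) :=
    (iA.mul_prod iB).integrableOn
  have i2 : IntegrableOn (fun p : ℝ × ℝ => A' p.1 * B' p.2) (Ioi (0:ℝ) ×ˢ Ioo (-π) π) :=
    (iA'.mul_prod iB').integrableOn
  have hS : MeasurableSet (Ioi (0:ℝ) ×ˢ Ioo (-π) π) := measurableSet_Ioi.prod measurableSet_Ioo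
  rw [← hPolar, ← setIntegral_eq_integral_of_forall_compl_eq_zero hB,
    ← setIntegral_eq_integral_of_forall_compl_eq_zero hB', ← setIntegral_prod_mul,
    ← setIntegral_prod_mul, ← Measure.volume_eq_prod, ← integral_add i1 i2]
  refine integral_mono_of_nonneg ?_ (i1.add i2) ?_
  · refine ae_restrict_of_forall_mem hS ?_
    rintro ⟨r, θ⟩ ⟨h1, h2⟩
    exact mul_nonneg (le_of_lt h1) (h0 _)
  · refine ae_restrict_of_forall_mem hS ?_
    rintro ⟨r, θ⟩ ⟨h1, h2⟩
    exact hh r θ h1 h2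


lemma hE_dist_foot (r θ φ : ℝ) :
    ‖hE r θ - hE (r * Real.cos (φ - θ)) φ‖ ^ 2 = (r * Real.sin (φ - θ)) ^ 2 := by
  rw [Complex.sq_norm, Complex.normSq_apply, Complex.sub_re, Complex.sub_im, hE_re, hE_re,
    hE_im, hE_im]
  have h1 := Real.sin_sq_add_cos_sq (φ - θ)
  have h2 := Real.sin_sq_add_cos_sq θ
  have h3 := Real.sin_sq_add_cos_sq φ
  have h4 : Real.cos (φ - θ) = Real.cos φ * Real.cos θ + Real.sin φ * Real.sin θ :=
    Real.cos_sub φ θ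
  have e : (r * Real.cos θ - r * Real.cos (φ - θ) * Real.cos φ) *
      (r * Real.cos θ - r * Real.cos (φ - θ) * Real.cos φ) +
      (r * Real.sin θ - r * Real.cos (φ - θ) * Real.sin φ) *
      (r * Real.sin θ - r * Real.cos (φ - θ) * Real.sin φ) =
      r ^ 2 * ((Real.sin θ ^ 2 + Real.cos θ ^ 2) + Real.cos (φ - θ) ^ 2 *
        (Real.sin φ ^ 2 + Real.cos φ ^ 2) - 2 * Real.cos (φ - θ) *
        (Real.cos φ * Real.cos θ + Real.sin φ * Real.sin θ)) := by ring
  rw [e, h2, h3, ← h4]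
  linear_combination r ^ 2 * (-h1)

/-- The distance bound near the reflex vertex. -/
lemma hDist {F : Set E2} {β ℓ : ℝ} (hβ : π < β) (hβ2 : β < 2 * π)
    (L : ℂ ≃ₗᵢ[ℝ] E2) (v : E2)
    (H2 : ∀ s, 0 ≤ s → s ≤ ℓ → v + L (hE s (β / 2)) ∈ F ∧ v + L (hE s (-(β / 2))) ∈ F)
    {r θ : ℝ} (hr : 0 < r) (hrℓ : r ≤ ℓ) (hθ : |θ| < β / 2) :
    Metric.infDist (v + L (hE r θ)) F ≤ r * Real.cos (max (|θ| - (β - π) / 2) 0) := by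
  have hd : ∀ w, dist (v + L (hE r θ)) (v + L w) = ‖hE r θ - w‖ := by
    intro w
    rw [dist_add_left, L.dist_map, dist_eq_norm]
  rcases le_total |θ| ((β - π) / 2) with h | h
  · rw [max_eq_right (by linarith), Real.cos_zero, mul_one]
    have h0 := (H2 0 le_rfl (by linarith)).1
    refine (Metric.infDist_le_dist_of_mem h0).trans ?_
    rw [hd]
    have : hE 0 (β / 2) = 0 := by simp [hE]
    rw [this, sub_zero, hE_norm θ hr.le]
  · rw [max_eq_left (by linarith)]
    have hx : Real.cos (|θ| - (β - π) / 2) = Real.sin (β / 2 - |θ|) := by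
      rw [← Real.cos_pi_div_two_sub]; congr 1; ring
    have hs0 : 0 ≤ Real.sin (β / 2 - |θ|) :=
      Real.sin_nonneg_of_nonneg_of_le_pi (by linarith) (by linarith [abs_nonneg θ])
    have hc0 : 0 ≤ Real.cos (β / 2 - |θ|) :=
      Real.cos_nonneg_of_mem_Icc ⟨by linarith, by linarith⟩
    have hc1 := Real.cos_le_one (β / 2 - |θ|)
    rw [hx]
    have key : ∀ φ, v + L (hE (r * Real.cos (φ - θ)) φ) ∈ F →
        |Real.sin (φ - θ)| = Real.sin (β / 2 - |θ|) →
        Metric.infDist (v + L (hE r θ)) F ≤ r * Real.sin (β / 2 - |θ|) := by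
      intro φ h1 h2
      refine (Metric.infDist_le_dist_of_mem h1).trans ?_
      rw [hd]
      refine abs_le_of_sq_le_sq' ?_ (by positivity) |>.2
      rw [hE_dist_foot, ← h2, mul_pow, mul_pow, sq_abs]
    have hm1 : 0 ≤ r * Real.cos (β / 2 - |θ|) := by positivity
    have hm2 : r * Real.cos (β / 2 - |θ|) ≤ ℓ := by nlinarith
    rcases le_total 0 θ with h' | h'
    · rw [abs_of_nonneg h'] at *
      exact key (β / 2) (H2 _ hm1 hm2).1 (abs_of_nonneg hs0)
    · rw [abs_of_nonpos h'] at *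
      refine key (-(β / 2)) ?_ ?_
      · have := (H2 _ hm1 hm2).2
        rwa [show β / 2 - -θ = -(-(β / 2) - θ) by ring, Real.cos_neg] at this
      · rw [show -(β / 2) - θ = -(β / 2 - -θ) by ring, Real.sin_neg, abs_neg, abs_of_nonneg hs0]

lemma hTransfer (L : ℂ ≃ₗᵢ[ℝ] E2) (v : E2) (h : E2 → ℝ) :
    ∫ x, h x = ∫ z, h (v + L z) := by
  rw [← integral_add_left_eq_self h v]
  exact ((LinearIsometryEquiv.measurePreserving L).integral_comp
    L.toHomeomorph.measurableEmbedding (fun x => h (v + x))).symm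

lemma hCore {Ω : Set E2} {β c ε ℓ : ℝ} (hΩ : IsOpen Ω) (hβ : π < β) (hβ2 : β < 2 * π)
    (L : ℂ ≃ₗᵢ[ℝ] E2) (v : E2) (hε : 0 < ε) (hℓ : 0 < ℓ) (hc : 0 < c)
    (H1 : ∀ r θ, 0 < r → r < ε → |θ| < β / 2 → v + L (hE r θ) ∈ Ω)
    (H2 : ∀ s, 0 ≤ s → s ≤ ℓ → v + L (hE s (β / 2)) ∈ frontier Ω ∧
      v + L (hE s (-(β / 2))) ∈ frontier Ω)
    {f : ℝ → ℝ} {a : ℝ} (hf : ContDiff ℝ (⊤ : ℕ∞) f) (ha0 : 0 < a) (ha : a < β / 2)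
    (hfz : ∀ θ, θ ∉ Icc (-a) a → f θ = 0)
    (hlt : ∫ θ, (deriv f θ) ^ 2 < c * ∫ θ, f θ ^ 2 * hV ((β - π) / 2) θ) :
    ∃ u : E2 → ℝ, ContDiff ℝ (⊤ : ℕ∞) u ∧ HasCompactSupport u ∧ tsupport u ⊆ Ω ∧ u ≠ 0 ∧
        ∫ x in Ω, ‖gradient u x‖ ^ 2 <
          c * ∫ x in Ω, (u x) ^ 2 / (Metric.infDist x (frontier Ω)) ^ 2 := by
  have haπ : a < π := by linarith
  set m := (β - π) / 2 with hm
  set A := ∫ θ, (deriv f θ) ^ 2 with hA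
  set B := ∫ θ, f θ ^ 2 * hV m θ with hB
  set D := ∫ θ, f θ ^ 2 with hD
  have hD0 : 0 ≤ D := integral_nonneg fun θ => sq_nonneg _
  have hη : 0 < (c * B - A) / (D + 1) := div_pos (by linarith) (by linarith)
  obtain ⟨g, r1, r2, hg, hr1, hr2, hgz, hglt⟩ := hRadial hη (lt_min hε hℓ)
  have hr2ε : r2 < ε := hr2.trans_le (min_le_left _ _)
  have hr2ℓ : r2 < ℓ := hr2.trans_le (min_le_right _ _)
  set P := ∫ r in Ioi (0:ℝ), g r ^ 2 / r with hP
  set R := ∫ r in Ioi (0:ℝ), r * (deriv g r) ^ 2 with hR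
  have hR0 : 0 ≤ R := setIntegral_nonneg measurableSet_Ioi fun r hr =>
    mul_nonneg (le_of_lt hr) (sq_nonneg _)
  have hP0 : 0 < P := by
    by_contra h
    have : (c * B - A) / (D + 1) * P ≤ 0 := mul_nonpos_of_nonneg_of_nonpos hη.le (not_lt.1 h)
    linarith
  -- the trial function
  let T : E2 → ℂ := fun x => L.symm (x - v)
  have hT : ∀ z, T (v + L z) = z := fun z => by simp [T]
  have hT' : ∀ x, v + L (T x) = x := fun x => by simp [T]
  have hTc : ContDiff ℝ (⊤ : ℕ∞) T := L.symm.contDiff.comp (contDiff_id.sub contDiff_const)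
  let u : E2 → ℝ := fun x => hU f g (T x)
  have hUs := hU_contDiff hr1 haπ hf hg hfz hgz
  have hus : ContDiff ℝ (⊤ : ℕ∞) u := hUs.comp hTc
  let K : Set E2 := (fun z => v + L z) '' hK r1 r2 a
  have hKc : IsCompact K := (hK_compact r1 r2 a).image (by fun_prop)
  have hKz : ∀ x, x ∉ K → u x = 0 := by
    intro x hx
    refine hU_zero hfz hgz fun h => hx ⟨T x, h, hT' x⟩
  have htK : tsupport u ⊆ K := closure_minimal (fun x hx => by
    by_contra h; exact hx (hKz x h)) hKc.isClosed
  have hKΩ : K ⊆ Ω := by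
    rintro x ⟨z, ⟨⟨r, θ⟩, ⟨h1, h2⟩, rfl⟩, rfl⟩
    exact H1 r θ (lt_of_lt_of_le hr1 h1.1) (lt_of_le_of_lt h1.2 hr2ε)
      (lt_of_le_of_lt (abs_le.2 h2) ha)
  have hucs : HasCompactSupport u := HasCompactSupport.of_support_subset_isCompact hKc
    (subset_closure.trans htK)
  have htΩ : tsupport u ⊆ Ω := htK.trans hKΩ
  -- upper bound for the gradient term
  have hgrad : ∫ x in Ω, ‖gradient u x‖ ^ 2 ≤ P * A + R * D := by
    have e0 : ∀ x, ‖gradient u x‖ = ‖fderiv ℝ u x‖ := by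
      intro x
      rw [gradient, LinearIsometryEquiv.norm_map]
    rw [setIntegral_eq_integral_of_forall_compl_eq_zero, hTransfer L v]
    · refine hPolarLe (A := fun r => g r ^ 2 / r) (B := fun θ => deriv f θ ^ 2)
        (A' := fun r => r * deriv g r ^ 2) (B' := fun θ => f θ ^ 2) ?_ ?_ ?_ ?_ ?_ ?_ ?_ ?_
      · intro θ hθ
        rw [hDeriv_zero hfz θ fun h => hθ ⟨by linarith [h.1], by linarith [h.2]⟩]; simp
      · intro θ hθ
        rw [hfz θ fun h => hθ ⟨by linarith [h.1], by linarith [h.2]⟩]; simp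
      · intro z; positivity
      · refine hInt_of_cont (a := r1) (b := r2) ?_ fun r hr => by rw [hgz r hr]; simp
        refine ContinuousOn.div (by have := hg.continuous; fun_prop) continuousOn_id ?_
        intro r hr; exact (lt_of_lt_of_le hr1 hr.1).ne'
      · refine hInt_of_cont (a := -a) (b := a) ?_ fun r hr => by rw [hDeriv_zero hfz r hr]; simp
        have := hf.continuous_deriv (by simp)
        fun_prop
      · refine hInt_of_cont (a := r1) (b := r2) ?_ fun r hr => by rw [hDeriv_zero hgz r hr]; simp
        have := hg.continuous_deriv (by simp)
        fun_prop
      · refine hInt_of_cont (a := -a) (b := a) ?_ fun r hr => by rw [hfz r hr]; simp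
        have := hf.continuous
        fun_prop
      · intro r θ hr hθ
        have hs : hE r θ ∈ Complex.slitPlane := by
          have : hE r θ ∈ hK r r |θ| :=
            ⟨(r, θ), ⟨⟨le_rfl, le_rfl⟩, abs_le.1 le_rfl⟩, rfl⟩
          exact hK_slit hr (abs_lt.2 hθ) this
        have h1 := hU_fderiv hf hg hs
        rw [hE_norm θ hr.le, hE_arg hr ⟨hθ.1, hθ.2.le⟩] at h1
        have h2 : ‖fderiv ℝ u (v + L (hE r θ))‖ ≤ ‖fderiv ℝ (hU f g) (hE r θ)‖ := by
          have hTd : HasFDerivAt T (L.symm.toContinuousLinearEquiv : E2 →L[ℝ] ℂ)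
              (v + L (hE r θ)) :=
            (L.symm.toContinuousLinearEquiv : E2 →L[ℝ] ℂ).hasFDerivAt.comp _
              ((hasFDerivAt_id _).sub_const v)
          have hUd : HasFDerivAt (hU f g) (fderiv ℝ (hU f g) (hE r θ)) (T (v + L (hE r θ))) := by
            rw [hT]; exact ((hUs.differentiable (by simp)) _).hasFDerivAt
          have h3 : HasFDerivAt u _ (v + L (hE r θ)) := hUd.comp _ hTd
          rw [h3.fderiv]
          refine ContinuousLinearMap.opNorm_le_bound _ (norm_nonneg _) fun w => ?_
          have h4 := (fderiv ℝ (hU f g) (hE r θ)).le_opNorm (L.symm w)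
          rw [L.symm.norm_map] at h4
          exact h4
        rw [e0]
        calc r * ‖fderiv ℝ u (v + L (hE r θ))‖ ^ 2
            ≤ r * (deriv f θ ^ 2 * (g r ^ 2 / r ^ 2) + f θ ^ 2 * deriv g r ^ 2) := by
              gcongr
              refine le_trans ?_ h1
              gcongr
          _ = _ := by field_simp
    · intro x hx
      rw [e0, (HasFDerivAt.of_notMem_tsupport ℝ fun h => hx (htΩ h)).fderiv]
      simp
  -- lower bound for the potential term
  have hpot : P * B ≤ ∫ x in Ω, (u x) ^ 2 / (Metric.infDist x (frontier Ω)) ^ 2 := by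
    let W : ℂ → ℝ := fun z => (f z.arg ^ 2 * hV m z.arg) * (g ‖z‖ ^ 2 / ‖z‖ ^ 2)
    have hWz : ∀ z, z ∉ hK r1 r2 a → W z = 0 := by
      intro z hz
      have := hU_zero hfz hgz hz
      have e : W z = hU f g z ^ 2 * (hV m z.arg / ‖z‖ ^ 2) := by simp only [W, hU]; ring
      rw [e, this]; simp
    have hWI : ∫ z, W z = P * B := by
      refine hPolarProd (A := fun r => g r ^ 2 / r) ?_ ?_
      · intro θ hθ
        rw [hfz θ fun h => hθ ⟨by linarith [h.1], by linarith [h.2]⟩]; simp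
      · intro r θ hr hθ
        simp only [W]
        rw [hE_norm θ hr.le, hE_arg hr ⟨hθ.1, hθ.2.le⟩]
        field_simp
    have hfr : (frontier Ω).Nonempty := ⟨_, (H2 0 le_rfl hℓ.le).1⟩
    have hpos : ∀ x ∈ Ω, 0 < Metric.infDist x (frontier Ω) := by
      intro x hx
      rw [← isClosed_frontier.notMem_iff_infDist_pos hfr, hΩ.frontier_eq]
      exact fun h => h.2 hx
    have hcont : Continuous fun x => (u x) ^ 2 / (Metric.infDist x (frontier Ω)) ^ 2 := by
      rw [continuous_iff_continuousAt]
      intro x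
      by_cases hx : x ∈ Ω
      · refine ContinuousAt.div (hus.continuous.continuousAt.pow 2)
          ((Metric.continuous_infDist_pt _).continuousAt.pow 2) ?_
        exact (pow_pos (hpos x hx) 2).ne'
      · have hx' : x ∉ tsupport u := fun h => hx (htΩ h)
        have : (fun x => (u x) ^ 2 / (Metric.infDist x (frontier Ω)) ^ 2) =ᶠ[nhds x]
            fun _ => 0 := by
          filter_upwards [(isClosed_tsupport u).isOpen_compl.mem_nhds hx'] with y hy
          rw [image_eq_zero_of_notMem_tsupport hy]; simp
        exact continuousAt_const.congr this.symm
    have huInt : Integrable fun x => (u x) ^ 2 / (Metric.infDist x (frontier Ω)) ^ 2 := by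
      refine hcont.integrable_of_hasCompactSupport ?_
      refine HasCompactSupport.of_support_subset_isCompact hKc fun x hx => ?_
      by_contra h
      exact hx (by simp [hKz x h])
    have hW0 : ∀ z, 0 ≤ W z := by
      intro z; simp only [W, hV]; positivity
    rw [setIntegral_eq_integral_of_forall_compl_eq_zero
      (fun x hx => by rw [hKz x fun h => hx (hKΩ h)]; simp)]
    rw [← hWI]
    have : ∫ z, W z = ∫ x, W (T x) := by
      rw [hTransfer L v]; simp only [hT]
    rw [this]
    refine integral_mono_of_nonneg (Filter.Eventually.of_forall fun x => hW0 _) huInt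
      (Filter.Eventually.of_forall fun x => ?_)
    by_cases hx : T x ∈ hK r1 r2 a
    · obtain ⟨⟨r, θ⟩, ⟨h1, h2⟩, h3⟩ := hx
      simp only at h1 h2 h3
      have hr : 0 < r := lt_of_lt_of_le hr1 h1.1
      have hθ : |θ| < β / 2 := lt_of_le_of_lt (abs_le.2 h2) ha
      have hxe : x = v + L (hE r θ) := by rw [h3, hT']
      have hd := hDist hβ hβ2 L v H2 hr (h1.2.trans hr2ℓ.le) hθ
      rw [← hxe, ← hm] at hd
      have hxΩ : x ∈ Ω := by
        rw [hxe]; exact H1 r θ hr (lt_of_le_of_lt h1.2 hr2ε) hθ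
      have hdp := hpos x hxΩ
      simp only [W, u, ← h3, hU]
      rw [hE_norm θ hr.le, hE_arg hr ⟨by linarith [h2.1], by linarith [h2.2]⟩, hV]
      have hle : (Metric.infDist x (frontier Ω)) ^ 2 ≤
          (r * Real.cos (max (|θ| - m) 0)) ^ 2 := by gcongr
      calc f θ ^ 2 * (1 / Real.cos (max (|θ| - m) 0) ^ 2) * (g r ^ 2 / r ^ 2)
          = (f θ * g r) ^ 2 / (r * Real.cos (max (|θ| - m) 0)) ^ 2 := by
            field_simp
        _ ≤ _ := by gcongr
    · simp only
      rw [hWz _ hx]; positivity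
  have hfinal : P * A + R * D < c * (P * B) := by
    have h1 : R * D ≤ (c * B - A) / (D + 1) * P * D := mul_le_mul_of_nonneg_right hglt.le hD0
    have h2 : (c * B - A) / (D + 1) * P * D < (c * B - A) * P := by
      rw [div_mul_eq_mul_div, div_mul_eq_mul_div, div_lt_iff₀ (by linarith)]
      have : 0 < (c * B - A) * P := mul_pos (by linarith) hP0
      nlinarith
    nlinarith
  have hmain : ∫ x in Ω, ‖gradient u x‖ ^ 2 <
      c * ∫ x in Ω, (u x) ^ 2 / (Metric.infDist x (frontier Ω)) ^ 2 :=
    lt_of_le_of_lt hgrad (hfinal.trans_le (mul_le_mul_of_nonneg_left hpot hc.le))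
  refine ⟨u, hus, hucs, htΩ, ?_, hmain⟩
  intro h0
  have h1 : ∫ x in Ω, (u x) ^ 2 / (Metric.infDist x (frontier Ω)) ^ 2 = 0 := by
    simp [h0]
  rw [h1, mul_zero] at hmain
  have : 0 ≤ ∫ x in Ω, ‖gradient u x‖ ^ 2 := integral_nonneg fun x => sq_nonneg _
  linarith


lemma hE_exp (r θ : ℝ) : hE r θ = r * Complex.exp (θ * Complex.I) := by
  rw [hE, Complex.exp_mul_I]

lemma hE_smul (s r θ : ℝ) : s • hE r θ = hE (s * r) θ := by
  simp only [hE, Complex.real_smul, Complex.ofReal_mul]; ring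

lemma hE_rot (t r θ : ℝ) : rotation (Circle.exp t) (hE r θ) = hE r (θ + t) := by
  rw [rotation_apply, Circle.coe_exp, hE_exp, hE_exp, Complex.ofReal_add, add_mul, Complex.exp_add]
  ring

lemma hE_congr {r x y : ℝ} (h1 : Real.cos x = Real.cos y) (h2 : Real.sin x = Real.sin y) :
    hE r x = hE r y := by
  apply Complex.ext
  · rw [hE_re, hE_re, h1]
  · rw [hE_im, hE_im, h2]

/-- A frame adapted to two directions with prescribed angle. -/
lemma hFrame {p q : E2} {β : ℝ} (hp : p ≠ 0) (hq : q ≠ 0)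
    (h : InnerProductGeometry.angle p q = 2 * π - β) :
    ∃ L : ℂ ≃ₗᵢ[ℝ] E2, (p = L (hE ‖p‖ (-(β / 2))) ∧ q = L (hE ‖q‖ (β / 2))) ∨
      (q = L (hE ‖q‖ (-(β / 2))) ∧ p = L (hE ‖p‖ (β / 2))) := by
  let J : ℂ ≃ₗᵢ[ℝ] E2 := Complex.orthonormalBasisOneI.repr
  have hp0 : 0 < ‖p‖ := norm_pos_iff.2 hp
  have hq0 : 0 < ‖q‖ := norm_pos_iff.2 hq
  set ψ := (J.symm p).arg with hψ
  set φ := (J.symm q).arg with hφ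
  have hP : p = J (hE ‖p‖ ψ) := by
    have h1 := hE_self (J.symm p)
    rw [J.symm.norm_map] at h1
    rw [hψ, h1, J.apply_symm_apply]
  have hQ : q = J (hE ‖q‖ φ) := by
    have h1 := hE_self (J.symm q)
    rw [J.symm.norm_map] at h1
    rw [hφ, h1, J.apply_symm_apply]
  have hcos : Real.cos (φ - ψ) = Real.cos β := by
    have h1 := InnerProductGeometry.cos_angle p q
    rw [h, Real.cos_two_pi_sub, eq_div_iff (by positivity)] at h1
    have h2 : inner ℝ p q = ‖p‖ * ‖q‖ * Real.cos (φ - ψ) := by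
      conv_lhs => rw [hP, hQ]
      rw [J.inner_map_map, Complex.inner]
      simp only [Complex.mul_re, Complex.conj_re, Complex.conj_im, hE_re, hE_im, Real.cos_sub]
      ring
    rw [h2] at h1
    have h3 : 0 < ‖p‖ * ‖q‖ := by positivity
    have : (‖p‖ * ‖q‖) * Real.cos (φ - ψ) = (‖p‖ * ‖q‖) * Real.cos β := by linarith
    exact mul_left_cancel₀ h3.ne' this
  have hsin : Real.sin (φ - ψ) = Real.sin β ∨ Real.sin (φ - ψ) = -Real.sin β := by
    apply sq_eq_sq_iff_eq_or_eq_neg.1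
    rw [Real.sin_sq, Real.sin_sq, hcos]
  have e1 : φ = ψ + (φ - ψ) := by ring
  rcases hsin with hs | hs
  · refine ⟨(rotation (Circle.exp (ψ + β / 2))).trans J, Or.inl ⟨?_, ?_⟩⟩
    · rw [LinearIsometryEquiv.trans_apply, hE_rot, show -(β / 2) + (ψ + β / 2) = ψ by ring]
      exact hP
    · rw [LinearIsometryEquiv.trans_apply, hE_rot, show β / 2 + (ψ + β / 2) = ψ + β by ring]
      refine hQ.trans (congrArg J (hE_congr ?_ ?_))
      · rw [e1, Real.cos_add, Real.cos_add, hs, hcos]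
      · rw [e1, Real.sin_add, Real.sin_add, hs, hcos]
  · refine ⟨(rotation (Circle.exp (ψ - β / 2))).trans J, Or.inr ⟨?_, ?_⟩⟩
    · rw [LinearIsometryEquiv.trans_apply, hE_rot, show -(β / 2) + (ψ - β / 2) = ψ + -β by ring]
      refine hQ.trans (congrArg J (hE_congr ?_ ?_))
      · rw [e1, Real.cos_add, Real.cos_add, hs, hcos, Real.cos_neg, Real.sin_neg]
      · rw [e1, Real.sin_add, Real.sin_add, hs, hcos, Real.cos_neg, Real.sin_neg]
    · rw [LinearIsometryEquiv.trans_apply, hE_rot, show β / 2 + (ψ - β / 2) = ψ by ring]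
      exact hP

lemma hWedge_not {v a b : E2} {β : ℝ} (hβ : π < β) (hβ2 : β < 2 * π) (L : ℂ ≃ₗᵢ[ℝ] E2)
    (ha : a - v = L (hE ‖a - v‖ (-(β / 2)))) (hb : b - v = L (hE ‖b - v‖ (β / 2)))
    {r θ : ℝ} (hr : 0 < r) (hθ : |θ| < β / 2) : v + L (hE r θ) ∉ wedge v a b := by
  rintro ⟨s, t, hs, ht, h⟩
  have h1 : L (hE r θ) = L (s • hE ‖a - v‖ (-(β / 2)) + t • hE ‖b - v‖ (β / 2)) := by
    rw [map_add, L.map_smul, L.map_smul, ← ha, ← hb]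
    rw [add_assoc] at h
    exact add_left_cancel h
  have h2 := L.injective h1
  rw [hE_smul, hE_smul] at h2
  have hx : 0 ≤ s * ‖a - v‖ := by positivity
  have hy : 0 ≤ t * ‖b - v‖ := by positivity
  set x := s * ‖a - v‖
  set y := t * ‖b - v‖
  have hre := congrArg Complex.re h2
  have him := congrArg Complex.im h2
  simp only [Complex.add_re, Complex.add_im, hE_re, hE_im, Real.cos_neg, Real.sin_neg] at hre him
  have hsin : 0 < Real.sin (β / 2) := Real.sin_pos_of_pos_of_lt_pi (by linarith) (by linarith)
  have hcos : Real.cos (β / 2) < 0 :=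
    Real.cos_neg_of_pi_div_two_lt_of_lt (by linarith) (by linarith)
  have hsc : Real.sin (β / 2) * Real.cos (β / 2) < 0 := mul_neg_of_pos_of_neg hsin hcos
  have hθ' := abs_lt.1 hθ
  rcases le_total 0 θ with h' | h'
  · have k1 : Real.sin (θ - β / 2) < 0 :=
      Real.sin_neg_of_neg_of_neg_pi_lt (by linarith) (by linarith)
    have k2 : r * Real.sin (θ - β / 2) = -2 * x * (Real.sin (β / 2) * Real.cos (β / 2)) := by
      rw [Real.sin_sub]
      linear_combination Real.cos (β / 2) * him - Real.sin (β / 2) * hre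
    nlinarith [mul_pos hr (neg_pos.2 k1), mul_nonneg hx (neg_pos.2 hsc).le]
  · have k1 : 0 < Real.sin (θ + β / 2) :=
      Real.sin_pos_of_pos_of_lt_pi (by linarith) (by linarith)
    have k2 : r * Real.sin (θ + β / 2) = 2 * y * (Real.sin (β / 2) * Real.cos (β / 2)) := by
      rw [Real.sin_add]
      linear_combination Real.cos (β / 2) * him + Real.sin (β / 2) * hre
    nlinarith [mul_pos hr k1, mul_nonneg hy (neg_pos.2 hsc).le]

lemma hSeg {v b : E2} {φ s : ℝ} (L : ℂ ≃ₗᵢ[ℝ] E2) (hbv : b ≠ v)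
    (hb : b - v = L (hE ‖b - v‖ φ)) (h0 : 0 ≤ s) (h1 : s ≤ ‖b - v‖) :
    v + L (hE s φ) ∈ segment ℝ v b := by
  have hn : 0 < ‖b - v‖ := norm_pos_iff.2 (sub_ne_zero.2 hbv)
  rw [segment_eq_image']
  refine ⟨s / ‖b - v‖, ⟨by positivity, (div_le_one hn).2 h1⟩, ?_⟩
  have : L (hE s φ) = (s / ‖b - v‖) • L (hE ‖b - v‖ φ) := by
    rw [← L.map_smul, hE_smul, div_mul_cancel₀ _ hn.ne']
  simp only
  rw [this, ← hb]

lemma hGeom {Ω : Set E2} {v a b : E2} {β c cβ βcr ε : ℝ} (hΩ : IsOpen Ω)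
    (hβ : π < β) (hβ2 : β < 2 * π)
    (h : (β ≤ βcr ∧ cβ = 1 / 4) ∨ (βcr < β ∧ cβ ∈ Set.Ioc (0 : ℝ) (1 / 4) ∧
      √cβ * Real.tan (√cβ * ((β - π) / 2)) = 2 * (Real.Gamma ((3 + √(1 - 4 * cβ)) / 4) /
         Real.Gamma ((1 + √(1 - 4 * cβ)) / 4)) ^ 2)) (hc : cβ < c)
    (hav : a ≠ v) (hbv : b ≠ v) (hε : 0 < ε)
    (hball : Metric.ball v ε ∩ Ω = Metric.ball v ε \ wedge v a b)
    (hsa : segment ℝ v a ⊆ frontier Ω) (hsb : segment ℝ v b ⊆ frontier Ω)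
    (L : ℂ ≃ₗᵢ[ℝ] E2)
    (ha : a - v = L (hE ‖a - v‖ (-(β / 2)))) (hb : b - v = L (hE ‖b - v‖ (β / 2))) :
    ∃ u : E2 → ℝ, ContDiff ℝ (⊤ : ℕ∞) u ∧ HasCompactSupport u ∧ tsupport u ⊆ Ω ∧ u ≠ 0 ∧
        ∫ x in Ω, ‖gradient u x‖ ^ 2 <
          c * ∫ x in Ω, (u x) ^ 2 / (Metric.infDist x (frontier Ω)) ^ 2 := by
  obtain ⟨hc0, f, α, hf, hα0, hα, hfz, hlt⟩ := hAng hβ hβ2 h hc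
  have hna : 0 < ‖a - v‖ := norm_pos_iff.2 (sub_ne_zero.2 hav)
  have hnb : 0 < ‖b - v‖ := norm_pos_iff.2 (sub_ne_zero.2 hbv)
  refine hCore hΩ hβ hβ2 L v hε (lt_min hna hnb) hc0 ?_ ?_ hf hα0 hα hfz hlt
  · intro r θ hr hrε hθ
    have h1 : v + L (hE r θ) ∈ Metric.ball v ε \ wedge v a b := by
      refine ⟨?_, hWedge_not hβ hβ2 L ha hb hr hθ⟩
      rw [Metric.mem_ball, dist_eq_norm, add_sub_cancel_left, L.norm_map, hE_norm θ hr.le]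
      exact hrε
    rw [← hball] at h1
    exact h1.2
  · intro s h0 h1
    exact ⟨hsb (hSeg L hbv hb h0 (h1.trans (min_le_right _ _))),
      hsa (hSeg L hav ha h0 (h1.trans (min_le_left _ _)))⟩

lemma hWedge_symm (v a b : E2) : wedge v a b = wedge v b a := by
  ext p
  constructor <;> rintro ⟨s, t, hs, ht, h⟩ <;> exact ⟨t, s, ht, hs, by rw [h]; abel⟩


/-- The constant `c_β` in the Hardy inequality for a non-convex quadrilateral with reflex
interior angle `β` is best possible: for every `c > c_β` there is a nonzero
`u ∈ C_c^∞(Ω)` with `∫_Ω |∇u|² < c ∫_Ω u²/d²`. -/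
theorem hardy_constant_nonconvex_quadrilateral_sharp
    (Ω : Set E2) (β βcr cβ : ℝ)
    (hΩ : IsNonconvexQuadrilateral Ω β)
    (hβcr : isBetaCr βcr)
    (hcβ : isHardyConst βcr β cβ) :
    ∀ c : ℝ, cβ < c →
      ∃ u : E2 → ℝ, ContDiff ℝ (⊤ : ℕ∞) u ∧ HasCompactSupport u ∧ tsupport u ⊆ Ω ∧ u ≠ 0 ∧
        ∫ x in Ω, ‖gradient u x‖ ^ 2 <
          c * ∫ x in Ω, (u x) ^ 2 / (Metric.infDist x (frontier Ω)) ^ 2 := by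
  intro c hc
  obtain ⟨hopen, _, _, hβ, hβ2, v, hinj, hfr, _, _, i₀, ⟨hang, ε, hε, hball⟩, _⟩ := hΩ
  have hi1 : i₀ - 1 + 1 = i₀ := sub_add_cancel i₀ 1
  have hav : v (i₀ - 1) ≠ v i₀ := hinj.ne ((by decide : ∀ i : Fin 4, i - 1 ≠ i) i₀)
  have hbv : v (i₀ + 1) ≠ v i₀ := hinj.ne ((by decide : ∀ i : Fin 4, i + 1 ≠ i) i₀)
  have hsa : segment ℝ (v i₀) (v (i₀ - 1)) ⊆ frontier Ω := by
    rw [hfr, segment_symm]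
    have := Set.subset_iUnion (fun i => segment ℝ (v i) (v (i + 1))) (i₀ - 1)
    simp only [hi1] at this
    exact this
  have hsb : segment ℝ (v i₀) (v (i₀ + 1)) ⊆ frontier Ω := by
    rw [hfr]
    exact Set.subset_iUnion (fun i => segment ℝ (v i) (v (i + 1))) i₀
  obtain ⟨L, ⟨h1, h2⟩ | ⟨h1, h2⟩⟩ := hFrame (sub_ne_zero.2 hav) (sub_ne_zero.2 hbv) hang
  · exact hGeom hopen hβ hβ2 hcβ hc hav hbv hε hball hsa hsb L h1 h2
  · rw [hWedge_symm] at hball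
    exact hGeom hopen hβ hβ2 hcβ hc hbv hav hε hball hsb hsa L h1 h2
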